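/- Let F = F_q with q ≡ 1 mod M, g a generator of F^×, h : Z_{q-1} → Z_M reduction mod M, and nmExt(x,y) = h(log_g(x+y)). Then nmExt is a (k, ε)-non-malleable extractor with ε = M·q^{1/4}·2^{1-k/2}: for any source X on F with H_∞(X) ≥ k, Y uniform on F independent of X, and any A : F → F with A(y) ≠ y for all y, the distribution (nmExt(X,Y), nmExt(X,A(Y)), Y) is ε-close to (U_{Z_M}, nmExt(X,A(Y)), Y). -/

import Mathlib

open Finset
open scoped Classical

open Polynomial in
theorem aux_phi {E : Type*} [Field E] (v0 : E) :
    ∃ φ : E[X] →+* PowerSeries E, (∀ c, φ (C c) = PowerSeries.C c) ∧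
      (∀ g, PowerSeries.constantCoeff (φ g) = g.eval v0) ∧
      (∀ n, ∀ g : E[X], g.natDegree < n → PowerSeries.X ^ n ∣ φ g → g = 0) := by
  refine ⟨(Polynomial.coeToPowerSeries.ringHom (R := E)).comp
    (Polynomial.compRingHom (X + C v0)), ?_, ?_, ?_⟩
  · intro c; simp
  · intro g
    simp [Polynomial.coeff_zero_eq_eval_zero, Polynomial.eval_comp]
  · intro n g hg hd
    rw [PowerSeries.X_pow_dvd_iff] at hd
    have h1 : g.comp (X + C v0) = 0 := by
      ext i
      by_cases hi : i < n
      · have := hd i hi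
        simpa using this
      · rw [coeff_eq_zero_of_natDegree_lt]
        · simp
        · rw [natDegree_comp]; simp; omega
    have := congrArg (fun h => h.comp (X - C v0)) h1
    simpa [comp_assoc] using this

open Polynomial in
theorem aux_root {E : Type*} [Field E] (M : ℕ) (hM : (M : E) ≠ 0)
    (f : PowerSeries E) (u0 : E) (hu0 : u0 ≠ 0) (hf : PowerSeries.constantCoeff f = u0 ^ M) :
    ∃ u : PowerSeries E, u ^ M = f := by
  have hM0 : M ≠ 0 := by rintro rfl; simp at hM
  obtain ⟨a, ha, -⟩ := (IsAdicComplete.henselianRing (PowerSeries E)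
    (Ideal.span {PowerSeries.X})).is_henselian (X ^ M - C f) (monic_X_pow_sub_C f hM0)
    (PowerSeries.C u0) (by
      rw [Ideal.mem_span_singleton, PowerSeries.X_dvd_iff]
      simp [hf]) (by
      apply IsUnit.map
      rw [PowerSeries.isUnit_iff_constantCoeff]
      simp only [derivative_sub, derivative_X_pow, derivative_C, sub_zero]
      simp [hM, hu0])
  refine ⟨a, ?_⟩
  simpa [sub_eq_zero] using ha

open Polynomial in
theorem aux_bez {R K L : Type*} [CommRing R] [IsDomain R] [Field K] [Algebra R K]
    [IsFractionRing R K] [Field L] (θ : R →+* L) (hθ : Function.Injective θ) (f P : R[X])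
    (hcop : IsCoprime (f.map (algebraMap R K)) (P.map (algebraMap R K))) (v : L)
    (h1 : f.eval₂ θ v = 0) (h2 : P.eval₂ θ v = 0) : False := by
  obtain ⟨a, b, hab⟩ := hcop
  have hψ : (IsFractionRing.lift hθ : K →+* L).comp (algebraMap R K) = θ :=
    RingHom.ext fun x => IsFractionRing.lift_algebraMap hθ x
  have key := congrArg (fun g => g.eval₂ (IsFractionRing.lift hθ : K →+* L) v) hab
  simp only [eval₂_add, eval₂_mul, eval₂_map, hψ, eval₂_one, h1, h2] at key
  simp at key

open Polynomial in
theorem aux_indep {E : Type*} [Field E] (M : ℕ) (hM : 0 < M) (N D : E[X]) (hND : IsCoprime N D)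
    (π : E[X]) (hπ : Prime π) (hπN : π ∣ N) (hπN2 : ¬ π ^ 2 ∣ N)
    (φ : E[X] →+* PowerSeries E) (hφ : Function.Injective φ) (u : PowerSeries E)
    (hu : φ D * u ^ M = φ N) (P : E[X][X]) (hP : P.natDegree < M)
    (h0 : P.eval₂ φ u = 0) : P = 0 := by
  by_contra hne
  have hπD : ¬ π ∣ D := fun h => hπ.not_isUnit (hND.isUnit_of_dvd' hπN h)
  have hD : D ≠ 0 := by rintro rfl; exact hπD (dvd_zero _)
  set f : E[X][X] := C D * X ^ M - C N with hf
  have hfd : f.degree = M := by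
    rw [hf, degree_sub_eq_left_of_degree_lt, degree_C_mul_X_pow _ hD]
    rw [degree_C_mul_X_pow _ hD]
    exact lt_of_le_of_lt degree_C_le (by exact_mod_cast hM)
  have hfn : f.natDegree = M := natDegree_eq_of_degree_eq_some hfd
  have hco : ∀ n, f.coeff n = (if n = M then D else 0) - (if n = 0 then N else 0) := by
    intro n; simp [hf, coeff_C, coeff_X_pow]
  have hlc : f.leadingCoeff = D := by
    rw [leadingCoeff, hfn, hco]; simp [hM.ne']
  have hprim : f.IsPrimitive := by
    intro r hr
    rw [C_dvd_iff_dvd_coeff] at hr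
    have h1 := hr M
    have h2 := hr 0
    rw [hco] at h1 h2
    simp [hM.ne'] at h1
    simp [hM.ne] at h2
    exact hND.isUnit_of_dvd' h2 h1
  have hirr : Irreducible f := by
    refine irreducible_of_eisenstein_criterion (P := Ideal.span {π})
      ((Ideal.span_singleton_prime hπ.ne_zero).2 hπ) ?_ ?_ ?_ ?_ hprim
    · rw [hlc, Ideal.mem_span_singleton]; exact hπD
    · intro n hn
      rw [hfd] at hn
      have hn' : n < M := by exact_mod_cast hn
      rw [hco, Ideal.mem_span_singleton, if_neg hn'.ne]
      split_ifs
      · simpa using hπN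
      · simp
    · rw [hfd]; exact_mod_cast hM
    · rw [hco, Ideal.span_singleton_pow, Ideal.mem_span_singleton, if_neg hM.ne]
      simpa using hπN2
  have hirr' := (IsPrimitive.irreducible_iff_irreducible_map_fraction_map (K := FractionRing E[X]) hprim).1 hirr
  have hinjK : Function.Injective (algebraMap E[X] (FractionRing E[X])) := IsFractionRing.injective _ _
  have hPK : P.map (algebraMap E[X] (FractionRing E[X])) ≠ 0 := by
    rwa [Ne, Polynomial.map_eq_zero_iff hinjK]
  have hcop : IsCoprime (f.map (algebraMap E[X] (FractionRing E[X]))) (P.map (algebraMap E[X] (FractionRing E[X]))) := by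
    rw [hirr'.coprime_iff_not_dvd]
    intro hd
    have := natDegree_le_of_dvd hd hPK
    rw [natDegree_map_eq_of_injective hinjK, natDegree_map_eq_of_injective hinjK, hfn] at this
    omega
  have hinjL : Function.Injective
      ((algebraMap (PowerSeries E) (FractionRing (PowerSeries E))).comp φ) :=
    (IsFractionRing.injective (PowerSeries E) _).comp hφ
  have e1 : ∀ g : E[X][X], g.eval₂ φ u = 0 → g.eval₂ ((algebraMap (PowerSeries E)
      (FractionRing (PowerSeries E))).comp φ) (algebraMap _ _ u) = 0 := by
    intro g hg; rw [← hom_eval₂, hg, map_zero]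
  exact aux_bez (K := FractionRing E[X]) _ hinjL f P hcop _ (e1 f (by simp [hf, hu])) (e1 P h0)

open Polynomial in
theorem aux_reduce {E R : Type*} [Field E] [CommRing R] (M : ℕ) (N D : E[X])
    (ψ : E[X] →+* R) (u : R) (hu : ψ D * u ^ M = ψ N) (e k : ℕ) (hk : k / M ≤ e) :
    ψ D ^ e * u ^ k = ψ (N ^ (k / M) * D ^ (e - k / M)) * u ^ (k % M) := by
  obtain ⟨d, hd⟩ : ∃ d, d = k / M := ⟨_, rfl⟩
  have h1 : u ^ k = (u ^ M) ^ d * u ^ (k % M) := by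
    rw [← pow_mul, ← pow_add, hd, Nat.div_add_mod]
  have h2 : ψ D ^ e = ψ D ^ (e - d) * ψ D ^ d := by
    rw [← pow_add, hd, Nat.sub_add_cancel hk]
  rw [← hd, map_mul, map_pow, map_pow, ← hu, h1, h2]
  ring

open Polynomial in
theorem aux_coeffdeg_mul {E : Type*} [Field E] (P Q : E[X][X]) (a b : ℕ)
    (hP : ∀ i, (P.coeff i).natDegree ≤ a) (hQ : ∀ i, (Q.coeff i).natDegree ≤ b) (i : ℕ) :
    ((P * Q).coeff i).natDegree ≤ a + b := by
  rw [coeff_mul]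
  apply natDegree_sum_le_of_forall_le
  intro x _
  exact natDegree_mul_le.trans (add_le_add (hP _) (hQ _))

open Polynomial in
theorem aux_coeffdeg_prod {E ι : Type*} [Field E] (s : Finset ι) (P : ι → E[X][X]) (a : ℕ)
    (hP : ∀ x ∈ s, ∀ i, ((P x).coeff i).natDegree ≤ a) (i : ℕ) :
    ((∏ x ∈ s, P x).coeff i).natDegree ≤ s.card * a := by
  induction s using Finset.induction_on generalizing i with
  | empty => simp [coeff_one]; split_ifs <;> simp
  | insert x s hx ih =>
    rw [Finset.prod_insert hx, Finset.card_insert_of_notMem hx, add_mul, one_mul, add_comm]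
    exact aux_coeffdeg_mul _ _ _ _ (hP x (by simp))
      (fun i => ih (fun y hy => hP y (by simp [hy])) i) i

open Polynomial in
theorem aux_order {E : Type*} [Field E] (M : ℕ) (hM : 0 < M) (ζ : E) (hζ : IsPrimitiveRoot ζ M)
    (N D : E[X]) (hND : IsCoprime N D) (δ : ℕ) (hN : N.natDegree ≤ δ) (hD : D.natDegree ≤ δ)
    (π : E[X]) (hπ : Prime π) (hπN : π ∣ N) (hπN2 : ¬ π ^ 2 ∣ N)
    (φ : E[X] →+* PowerSeries E) (hφ : Function.Injective φ)
    (hφ2 : ∀ n, ∀ g : E[X], g.natDegree < n → PowerSeries.X ^ n ∣ φ g → g = 0)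
    (u : PowerSeries E)
    (hu : φ D * u ^ M = φ N) (l r : ℕ) (hlr : M * (l + δ) < r) (P : E[X][X]) (hP : P.natDegree < M)
    (hPl : ∀ i, (P.coeff i).natDegree ≤ l)
    (h0 : PowerSeries.X ^ r ∣ P.eval₂ φ u) : P = 0 := by
  set Z := nthRootsFinset M (1 : E) with hZ
  have hZc : Z.card = M := hζ.card_nthRootsFinset
  have hZm : ∀ x, x ∈ Z ↔ x ^ M = 1 := fun x => mem_nthRootsFinset hM 1
  set F : E → E[X][X] := fun z => P.comp (C (C z) * X) with hF
  have hFc : ∀ z i, (F z).coeff i = P.coeff i * C z ^ i := fun z i => comp_C_mul_X_coeff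
  set G := ∏ z ∈ Z, F z with hG
  have hinv : G.comp (C (C ζ) * X) = G := by
    rw [hG, Polynomial.prod_comp]
    refine Finset.prod_bij' (fun z _ => ζ * z) (fun z _ => ζ⁻¹ * z) ?_ ?_ ?_ ?_ ?_
    · intro z hz; rw [hZm] at *; rw [mul_pow, hz, hζ.pow_eq_one, mul_one]
    · intro z hz; rw [hZm] at *; rw [mul_pow, hz, inv_pow, hζ.pow_eq_one]; simp
    · intro z _; rw [inv_mul_cancel_left₀ (hζ.ne_zero hM.ne')]
    · intro z _; rw [mul_inv_cancel_left₀ (hζ.ne_zero hM.ne')]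
    · intro z _
      simp only [hF, comp_assoc]
      congr 1
      simp
      ring
  have hGc : ∀ k, ¬ M ∣ k → G.coeff k = 0 := by
    intro k hk
    have h1 := congrArg (fun g => g.coeff k) hinv
    simp only [comp_C_mul_X_coeff] at h1
    have h2 : G.coeff k * (C (ζ ^ k) - 1) = 0 := by
      rw [mul_sub, C_pow, h1]; ring
    rcases mul_eq_zero.1 h2 with h | h
    · exact h
    · exfalso
      rw [sub_eq_zero, ← C_1] at h
      exact hk ((hζ.pow_eq_one_iff_dvd k).1 (C_injective h))
  have hGdeg : G.natDegree ≤ M * M := by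
    refine (natDegree_prod_le _ _).trans ?_
    refine (Finset.sum_le_card_nsmul _ _ M ?_).trans (by rw [hZc, smul_eq_mul])
    intro z _
    simp only [hF]
    refine natDegree_comp_le.trans ?_
    calc P.natDegree * (C (C z) * X).natDegree ≤ P.natDegree * 1 :=
          Nat.mul_le_mul_left _ ((natDegree_C_mul_le _ _).trans natDegree_X_le)
      _ ≤ M := by omega
  have hGl : ∀ i, (G.coeff i).natDegree ≤ M * l := by
    intro i
    rw [← hZc]
    refine aux_coeffdeg_prod _ _ _ ?_ i
    intro z _ i
    rw [hFc, ← C_pow]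
    exact (natDegree_mul_C_le _ _).trans (hPl i)
  have hGu : PowerSeries.X ^ r ∣ G.eval₂ φ u := by
    rw [hG, eval₂_finsetProd]
    have h1 : (1 : E) ∈ Z := by rw [hZm]; simp
    refine dvd_trans ?_ (Finset.dvd_prod_of_mem _ h1)
    simpa [hF] using h0
  set H : E[X] := ∑ k ∈ range (M * M + 1), G.coeff k * (N ^ (k / M) * D ^ (M - k / M)) with hH
  have hHu : φ H = φ D ^ M * G.eval₂ φ u := by
    rw [hH, eval₂_eq_sum_range' φ (n := M * M + 1) (by omega), map_sum, Finset.mul_sum]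
    refine Finset.sum_congr rfl fun k hk => ?_
    rw [Finset.mem_range] at hk
    by_cases hkM : M ∣ k
    · have hk2 : k / M ≤ M := by
        apply Nat.div_le_of_le_mul; omega
      have := aux_reduce M N D φ u hu M k hk2
      rw [Nat.mod_eq_zero_of_dvd hkM, pow_zero, mul_one] at this
      rw [map_mul, ← this]; ring
    · rw [hGc k hkM]; simp
  have hHd : H.natDegree < r := by
    refine lt_of_le_of_lt (natDegree_sum_le_of_forall_le (n := M * (l + δ)) _ _ ?_) hlr
    intro k hk
    rw [Finset.mem_range] at hk
    have hk2 : k / M ≤ M := by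
      apply Nat.div_le_of_le_mul; omega
    refine natDegree_mul_le.trans ?_
    rw [mul_add]
    refine add_le_add (hGl k) ?_
    refine natDegree_mul_le.trans ?_
    calc (N ^ (k / M)).natDegree + (D ^ (M - k / M)).natDegree
        ≤ (k / M) * δ + (M - k / M) * δ :=
          add_le_add (natDegree_pow_le.trans (Nat.mul_le_mul_left _ hN))
            (natDegree_pow_le.trans (Nat.mul_le_mul_left _ hD))
      _ = M * δ := by rw [← add_mul, Nat.add_sub_cancel' hk2]
  have hH0 : H = 0 := hφ2 r H hHd (by rw [hHu]; exact Dvd.dvd.mul_left hGu _)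
  have hπD : ¬ π ∣ D := fun h => hπ.not_isUnit (hND.isUnit_of_dvd' hπN h)
  have hD0 : D ≠ 0 := by rintro rfl; exact hπD (dvd_zero _)
  have hG0 : G.eval₂ φ u = 0 := by
    rw [hH0, map_zero] at hHu
    rcases mul_eq_zero.1 hHu.symm with h | h
    · exact absurd (hφ ((pow_eq_zero_iff hM.ne').1 h |>.trans (map_zero φ).symm)) hD0
    · exact h
  rw [hG, eval₂_finsetProd, Finset.prod_eq_zero_iff] at hG0
  obtain ⟨z, hz, hz0⟩ := hG0
  have hzne : z ≠ 0 := by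
    rintro rfl; rw [hZm, zero_pow hM.ne'] at hz; simp at hz
  have hFz : F z = 0 := by
    refine aux_indep M hM N D hND π hπ hπN hπN2 φ hφ u hu _ ?_ hz0
    refine lt_of_le_of_lt natDegree_comp_le ?_
    calc P.natDegree * (C (C z) * X).natDegree ≤ P.natDegree * 1 :=
          Nat.mul_le_mul_left _ ((natDegree_C_mul_le _ _).trans natDegree_X_le)
      _ < M := by omega
  ext1 i
  have := hFc z i
  rw [hFz, coeff_zero] at this
  rcases mul_eq_zero.1 this.symm with h | h
  · simpa using h
  · rw [← C_pow, C_eq_zero] at h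
    exact absurd h (pow_ne_zero _ hzne)


theorem aux_shift {E J : Type*} [Field E] [Fintype J] (p ν r : ℕ) [Fact p.Prime] [CharP E p]
    (hr : r = p ^ ν) (a : J → PowerSeries E)
    (H : ∀ t : J → E, PowerSeries.X ^ r ∣ ∑ j, PowerSeries.C (t j) * a j →
      ∑ j, PowerSeries.C (t j) * a j = 0) :
    ∀ n, ∀ b : J → PowerSeries E, ∑ j, a j * b j ^ r = 0 →
      ∑ j, PowerSeries.C ((PowerSeries.coeff n (b j)) ^ r) * a j = 0 := by
  have : CharP (PowerSeries E) p := charP_of_injective_ringHom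
    (PowerSeries.C_injective (R := E)) p
  intro n
  have hb : ∀ b : PowerSeries E, b ^ r = PowerSeries.X ^ r *
      (PowerSeries.mk fun n => PowerSeries.coeff (n + 1) b) ^ r +
      PowerSeries.C ((PowerSeries.coeff 0 b) ^ r) := by
    intro b
    conv_lhs => rw [PowerSeries.eq_X_mul_shift_add_const b]
    rw [hr, add_pow_char_pow, mul_pow, map_pow]
    simp
  have step : ∀ b : J → PowerSeries E, ∑ j, a j * b j ^ r = 0 →
      ∑ j, PowerSeries.C ((PowerSeries.coeff 0 (b j)) ^ r) * a j = 0 ∧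
      ∑ j, a j * (PowerSeries.mk fun n => PowerSeries.coeff (n + 1) (b j)) ^ r = 0 := by
    intro b h
    have h2 : PowerSeries.X ^ r *
        (∑ j, a j * (PowerSeries.mk fun n => PowerSeries.coeff (n + 1) (b j)) ^ r) +
        ∑ j, PowerSeries.C ((PowerSeries.coeff 0 (b j)) ^ r) * a j = 0 := by
      rw [← h, Finset.mul_sum, ← Finset.sum_add_distrib]
      refine Finset.sum_congr rfl fun j _ => ?_
      rw [hb (b j)]; ring
    have h3 : ∑ j, PowerSeries.C ((PowerSeries.coeff 0 (b j)) ^ r) * a j = 0 := by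
      apply H
      refine (Dvd.intro (-(∑ j, a j * (PowerSeries.mk fun n => PowerSeries.coeff (n + 1) (b j)) ^ r)) ?_)
      linear_combination (-1) * h2
    refine ⟨h3, ?_⟩
    rw [h3, add_zero] at h2
    exact (mul_eq_zero.1 h2).resolve_left (pow_ne_zero _ PowerSeries.X_ne_zero)
  induction n with
  | zero => intro b h; exact (step b h).1
  | succ n ih =>
    intro b h
    have := ih _ (step b h).2
    simpa using this

open Polynomial in
noncomputable def auxP {E : Type*} [Field E] (l M : ℕ) (t : Fin l × Fin M → E) : E[X][X] :=
  ∑ i, monomial (i.2 : ℕ) (monomial (i.1 : ℕ) (t i))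

open Polynomial in
theorem auxP_eval {E R : Type*} [Field E] [CommRing R] (l M : ℕ) (t : Fin l × Fin M → E)
    (φ : E[X] →+* R) (u : R) :
    (auxP l M t).eval₂ φ u = ∑ i, φ (C (t i)) * (φ X ^ (i.1 : ℕ) * u ^ (i.2 : ℕ)) := by
  simp only [auxP, eval₂_finsetSum, eval₂_monomial]
  refine Finset.sum_congr rfl fun i _ => ?_
  rw [← C_mul_X_pow_eq_monomial, map_mul, map_pow]; ring

open Polynomial in
theorem auxP_coeff {E : Type*} [Field E] (l M : ℕ) (t : Fin l × Fin M → E) (i : Fin l) (j : Fin M) :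
    ((auxP l M t).coeff j).coeff i = t (i, j) := by
  simp only [auxP, finsetSum_coeff, coeff_monomial]
  rw [Finset.sum_eq_single (i, j)]
  · simp
  · rintro ⟨i', j'⟩ _ hne
    by_cases h : (j' : ℕ) = j
    · rw [if_pos h, coeff_monomial, if_neg]
      intro h2
      exact hne (Prod.ext (Fin.ext h2) (Fin.ext h))
    · rw [if_neg h]; simp
  · simp

open Polynomial in
theorem auxP_natDegree {E : Type*} [Field E] (l M : ℕ) (hM : 0 < M) (t : Fin l × Fin M → E) :
    (auxP l M t).natDegree < M := by
  refine lt_of_le_of_lt (natDegree_sum_le_of_forall_le (n := M - 1) _ _ ?_) (by omega)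
  intro i _
  exact (natDegree_monomial_le _).trans (by have := i.2.2; omega)

open Polynomial in
theorem auxP_coeff_natDegree {E : Type*} [Field E] (l M : ℕ) (t : Fin l × Fin M → E) (k : ℕ) :
    ((auxP l M t).coeff k).natDegree ≤ l := by
  simp only [auxP, finsetSum_coeff, coeff_monomial]
  refine natDegree_sum_le_of_forall_le _ _ ?_
  intro i _
  split_ifs
  · exact (natDegree_monomial_le _).trans i.1.2.le
  · simp

open Polynomial in
theorem auxP_zero {E : Type*} [Field E] (l M : ℕ) (t : Fin l × Fin M → E) (h : auxP l M t = 0) :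
    t = 0 := by
  ext ⟨i, j⟩
  rw [← auxP_coeff l M t i j, h]; simp

open Polynomial in
theorem aux_nonvanish {E : Type*} [Field E] [Finite E] (p ν r : ℕ) [Fact p.Prime] [CharP E p]
    (hr : r = p ^ ν) (M : ℕ) (hM : 0 < M) (ζ : E) (hζ : IsPrimitiveRoot ζ M)
    (N D : E[X]) (hND : IsCoprime N D) (δ : ℕ) (hN : N.natDegree ≤ δ) (hD : D.natDegree ≤ δ)
    (π : E[X]) (hπ : Prime π) (hπN : π ∣ N) (hπN2 : ¬ π ^ 2 ∣ N)
    (φ : E[X] →+* PowerSeries E) (hφC : ∀ c, φ (C c) = PowerSeries.C c)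
    (hφ : Function.Injective φ)
    (hφ2 : ∀ n, ∀ g : E[X], g.natDegree < n → PowerSeries.X ^ n ∣ φ g → g = 0)
    (u : PowerSeries E)
    (hu : φ D * u ^ M = φ N) (l m : ℕ) (hlr : M * (l + δ) < r)
    (γ : Fin l × Fin M → Fin m × Fin M → E)
    (h0 : ∑ j, ∑ i, φ (C (γ i j)) * (φ X ^ (i.1 : ℕ) * u ^ (i.2 : ℕ)) *
      (φ X ^ (j.1 : ℕ) * u ^ (j.2 : ℕ)) ^ r = 0) : γ = 0 := by
  have key := aux_shift p ν r hr (fun j => (auxP l M (fun i => γ i j)).eval₂ φ u) (by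
    intro t ht
    have e : ∑ j, PowerSeries.C (t j) * (auxP l M (fun i => γ i j)).eval₂ φ u =
        (auxP l M (fun i => ∑ j, t j * γ i j)).eval₂ φ u := by
      simp only [auxP_eval, Finset.mul_sum]
      rw [Finset.sum_comm]
      refine Finset.sum_congr rfl fun i _ => ?_
      simp only [map_sum, Finset.sum_mul, map_mul, hφC]
      refine Finset.sum_congr rfl fun j _ => ?_
      ring
    rw [e] at ht ⊢
    rw [aux_order M hM ζ hζ N D hND δ hN hD π hπ hπN hπN2 φ hφ hφ2 u hu l r hlr _
      (auxP_natDegree l M hM _) (auxP_coeff_natDegree l M _) ht]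
    simp)
  have key2 := fun n => key n (fun j => φ X ^ (j.1 : ℕ) * u ^ (j.2 : ℕ)) (by
    rw [← h0]
    refine Finset.sum_congr rfl fun j _ => ?_
    rw [auxP_eval, Finset.sum_mul])
  have hroot : ∀ x : E, ∃ y, y ^ r = x := by
    intro x
    have : PerfectRing E p := inferInstance
    obtain ⟨y, hy⟩ := (bijective_iterateFrobenius E p ν).2 x
    exact ⟨y, by rw [hr, ← hy, iterateFrobenius_def]⟩
  choose rt hrt using hroot
  have hinj : ∀ x : E, x ^ r = 0 → x = 0 := fun x hx => by
    rw [hr] at hx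
    exact (pow_eq_zero_iff (pow_ne_zero _ (Nat.Prime.pos Fact.out).ne')).1 hx
  have key3 : ∀ n i, ∑ j : Fin m × Fin M,
      (PowerSeries.coeff n (φ X ^ (j.1 : ℕ) * u ^ (j.2 : ℕ))) ^ r * γ i j = 0 := by
    intro n
    have e : (auxP l M (fun i => ∑ j : Fin m × Fin M,
      (PowerSeries.coeff n (φ X ^ (j.1 : ℕ) * u ^ (j.2 : ℕ))) ^ r * γ i j)).eval₂ φ u = 0 := by
      rw [← key2 n]
      simp only [auxP_eval, Finset.mul_sum]
      rw [Finset.sum_comm (s := (univ : Finset (Fin m × Fin M)))]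
      refine Finset.sum_congr rfl fun i _ => ?_
      simp only [map_sum, Finset.sum_mul, map_mul, hφC]
      refine Finset.sum_congr rfl fun j _ => ?_
      ring
    have := auxP_zero _ _ _ (aux_indep M hM N D hND π hπ hπN hπN2 φ hφ u hu _
      (auxP_natDegree l M hM _) e)
    intro i
    exact congrFun this i
  ext i j
  have e : (auxP m M (fun j => rt (γ i j))).eval₂ φ u = 0 := by
    rw [auxP_eval]
    ext n
    rw [map_sum, map_zero]
    apply hinj
    rw [← key3 n i]
    rw [hr, sum_pow_char_pow]
    refine Finset.sum_congr rfl fun j _ => ?_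
    rw [hφC, PowerSeries.coeff_C_mul, mul_pow, ← hr, hrt, mul_comm]
  have h2 := auxP_zero _ _ _ (aux_indep M hM N D hND π hπ hπN hπN2 φ hφ u hu _
      (auxP_natDegree m M hM _) e)
  have h3 := congrFun h2 j
  simp only [Pi.zero_apply] at h3 ⊢
  rw [← hrt (γ i j), h3, zero_pow]
  rw [hr]; exact pow_ne_zero _ (Nat.Prime.pos Fact.out).ne'


open Polynomial in
noncomputable def auxH {E ι : Type*} [Field E] [Fintype ι] (M : ℕ) (N D : E[X]) (e : ℕ)
    (α β : ι → ℕ) (c : ι → E) (ρ : ℕ) : E[X] :=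
  ∑ x, if β x % M = ρ then C (c x) * (X ^ α x * (N ^ (β x / M) * D ^ (e - β x / M))) else 0

open Polynomial in
theorem auxH_eval {E ι R : Type*} [Field E] [Fintype ι] [CommRing R] (M : ℕ) (hM : 0 < M)
    (N D : E[X]) (e : ℕ)
    (α β : ι → ℕ) (c : ι → E) (he : ∀ x, β x / M ≤ e) (ψ : E[X] →+* R) (u : R)
    (hu : ψ D * u ^ M = ψ N) :
    ψ D ^ e * ∑ x, ψ (C (c x)) * (ψ X ^ α x * u ^ β x) =
      ∑ ρ ∈ range M, ψ (auxH M N D e α β c ρ) * u ^ ρ := by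
  simp only [auxH, map_sum, Finset.sum_mul, Finset.mul_sum]
  rw [Finset.sum_comm]
  refine Finset.sum_congr rfl fun x _ => ?_
  rw [Finset.sum_eq_single (β x % M)]
  · rw [if_pos rfl, map_mul, map_mul, map_pow, mul_assoc, mul_assoc,
      ← aux_reduce M N D ψ u hu e (β x) (he x)]
    ring
  · intro b _ hb
    rw [if_neg (Ne.symm hb)]; simp
  · intro h
    exact absurd (Finset.mem_range.2 (Nat.mod_lt _ hM)) h

open Polynomial in
theorem auxH_natDegree {E ι : Type*} [Field E] [Fintype ι] (M : ℕ)
    (N D : E[X]) (δ : ℕ) (hN : N.natDegree ≤ δ) (hD : D.natDegree ≤ δ) (e A : ℕ)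
    (α β : ι → ℕ) (c : ι → E) (he : ∀ x, β x / M ≤ e) (hα : ∀ x, α x ≤ A) (ρ : ℕ) :
    (auxH M N D e α β c ρ).natDegree ≤ A + e * δ := by
  refine natDegree_sum_le_of_forall_le _ _ fun x _ => ?_
  split_ifs
  · refine (natDegree_C_mul_le _ _).trans ?_
    refine natDegree_mul_le.trans (add_le_add ?_ ?_)
    · rw [natDegree_X_pow]; exact hα x
    · refine natDegree_mul_le.trans ?_
      calc (N ^ (β x / M)).natDegree + (D ^ (e - β x / M)).natDegree
        ≤ (β x / M) * δ + (e - β x / M) * δ :=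
          add_le_add (natDegree_pow_le.trans (Nat.mul_le_mul_left _ hN))
            (natDegree_pow_le.trans (Nat.mul_le_mul_left _ hD))
      _ = e * δ := by rw [← add_mul, Nat.add_sub_cancel' (he x)]
  · simp

theorem aux_expo (M a b s : ℕ) (ha : a < M) (hb : b < M) : (a * s + b) / M ≤ s := by
  rw [Nat.div_le_iff_le_mul_add_pred (by omega)]
  have : a * s ≤ M * s := Nat.mul_le_mul_right _ ha.le
  omega

theorem aux_lin {E ι κ : Type*} [Field E] [Fintype ι] [Fintype κ]
    (hc : Fintype.card κ < Fintype.card ι) (Q : ι → κ → E) :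
    ∃ γ : ι → E, γ ≠ 0 ∧ ∀ k, ∑ x, γ x * Q x k = 0 := by
  have h := LinearMap.ker_ne_bot_of_finrank_lt (K := E) (f := Fintype.linearCombination E Q)
    (by simpa using hc)
  obtain ⟨γ, hγ, hne⟩ := (Submodule.ne_bot_iff _).1 h
  refine ⟨γ, hne, fun k => ?_⟩
  have := congrFun (LinearMap.mem_ker.1 hγ) k
  simpa [Fintype.linearCombination_apply] using this

open Polynomial in
theorem stepanov {E : Type*} [Field E] [Fintype E] (p ν σ r s : ℕ) [Fact p.Prime] [CharP E p]
    (hr : r = p ^ ν) (hs : s = p ^ σ) (hQ : Fintype.card E = r * s)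
    (M : ℕ) (hM : 0 < M) (hMd : (M : E) ≠ 0) (ζ : E) (hζ : IsPrimitiveRoot ζ M)
    (N D : E[X]) (hND : IsCoprime N D) (δ : ℕ) (hN : N.natDegree ≤ δ) (hD : D.natDegree ≤ δ)
    (π : E[X]) (hπ : Prime π) (hπN : π ∣ N) (hπN2 : ¬ π ^ 2 ∣ N)
    (l m : ℕ) (hlr : M * (l + δ) < r) (hdim : M * ((l + δ) * s + m) < (l * M) * (m * M))
    (T : Finset E) (hT : ∀ V ∈ T, D.eval V ≠ 0 ∧ ∃ U, U ≠ 0 ∧ D.eval V * U ^ M = N.eval V) :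
    T.card ≤ l + (m + δ) * r := by
  rcases T.eq_empty_or_nonempty with rfl | ⟨V0, hV0⟩
  · simp
  obtain ⟨hDV0, U0, hU0, hDU0⟩ := hT V0 hV0
  obtain ⟨φ, hφC, hφ0, hφ2⟩ := aux_phi V0
  have hφ : Function.Injective φ := by
    rw [injective_iff_map_eq_zero]
    intro g hg
    exact hφ2 (g.natDegree + 1) g (by omega) (by rw [hg]; exact dvd_zero _)
  have hφD : φ D * (φ D)⁻¹ = 1 := PowerSeries.mul_inv_cancel _ (by rw [hφ0]; exact hDV0)
  obtain ⟨u, hu⟩ := aux_root M hMd (φ N * (φ D)⁻¹) U0 hU0 (by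
    rw [map_mul, PowerSeries.constantCoeff_inv, hφ0, hφ0, ← hDU0]
    field_simp)
  have hu' : φ D * u ^ M = φ N := by
    rw [hu]; linear_combination φ N * hφD
  have hD0 : φ D ≠ 0 := fun h => by rw [h, zero_mul] at hφD; exact zero_ne_one hφD
  let ι := (Fin l × Fin M) × (Fin m × Fin M)
  let α1 : ι → ℕ := fun x => x.1.1 * s + x.2.1
  let β1 : ι → ℕ := fun x => x.1.2 * s + x.2.2
  have he1 : ∀ x, β1 x / M ≤ s := fun x => aux_expo M _ _ s x.1.2.2 x.2.2.2
  have hα1 : ∀ x, α1 x ≤ l * s + m - 1 := by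
    intro x
    have h1 : (x.1.1 : ℕ) * s ≤ l * s := Nat.mul_le_mul_right _ x.1.1.2.le
    have := x.2.1.2
    simp only [α1]; omega
  obtain ⟨γ, hγ0, hγ⟩ := aux_lin (E := E) (ι := ι) (κ := Fin M × Fin ((l + δ) * s + m))
    (by simpa [ι] using hdim)
    (fun x k => if β1 x % M = k.1 then (X ^ α1 x * (N ^ (β1 x / M) * D ^ (s - β1 x / M))).coeff k.2
      else 0)
  have hm : 0 < m := by
    rcases Nat.eq_zero_or_pos m with rfl | h
    · simp at hdim
    · exact h
  have hH1 : ∀ ρ < M, auxH M N D s α1 β1 γ ρ = 0 := by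
    intro ρ hρ
    ext t
    by_cases ht : t < (l + δ) * s + m
    · have := hγ (⟨ρ, hρ⟩, ⟨t, ht⟩)
      rw [auxH, finsetSum_coeff, coeff_zero, ← this]
      refine Finset.sum_congr rfl fun x _ => ?_
      simp only
      split_ifs
      · rw [coeff_C_mul]
      · simp
    · rw [coeff_eq_zero_of_natDegree_lt, coeff_zero]
      refine lt_of_le_of_lt (auxH_natDegree M N D δ hN hD s _ α1 β1 γ he1 hα1 ρ) ?_
      have : (l + δ) * s + m = l * s + s * δ + m := by ring
      omega
  have hroot : ∀ x : E, ∃ y, y ^ s = x := by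
    intro x
    have : PerfectRing E p := inferInstance
    obtain ⟨y, hy⟩ := (bijective_iterateFrobenius E p σ).2 x
    exact ⟨y, by rw [hs, ← hy, iterateFrobenius_def]⟩
  choose rt hrt using hroot
  have hs0 : s ≠ 0 := by rw [hs]; exact pow_ne_zero _ (Nat.Prime.pos Fact.out).ne'
  let γ' : ι → E := fun x => rt (γ x)
  let α2 : ι → ℕ := fun x => x.2.1 * r + x.1.1
  let β2 : ι → ℕ := fun x => x.2.2 * r + x.1.2
  have he2 : ∀ x, β2 x / M ≤ r := fun x => aux_expo M _ _ r x.2.2.2 x.1.2.2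
  have hα2 : ∀ x, α2 x ≤ m * r + l := by
    intro x
    have h1 : (x.2.1 : ℕ) * r ≤ m * r := Nat.mul_le_mul_right _ x.2.1.2.le
    have := x.1.1.2
    simp only [α2]; omega
  -- vanishing
  have hvan : ∀ V U : E, D.eval V ≠ 0 → D.eval V * U ^ M = N.eval V →
      ∑ ρ ∈ range M, (auxH M N D r α2 β2 γ' ρ).eval V * U ^ ρ = 0 := by
    intro V U hDV hDU
    have h1 := auxH_eval M hM N D s α1 β1 γ he1 (evalRingHom V) U (by simpa using hDU)
    have h2 := auxH_eval M hM N D r α2 β2 γ' he2 (evalRingHom V) U (by simpa using hDU)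
    simp only [coe_evalRingHom, eval_C, eval_X] at h1 h2
    rw [← h2]
    rw [Finset.sum_eq_zero (s := range M) (fun ρ hρ => by
      rw [hH1 ρ (Finset.mem_range.1 hρ)]; simp)] at h1
    have h3 := (mul_eq_zero.1 h1).resolve_left (pow_ne_zero _ hDV)
    have h4 : (∑ x, γ' x * (V ^ α2 x * U ^ β2 x)) ^ s = 0 := by
      rw [← h3, hs, sum_pow_char_pow, ← hs]
      refine Finset.sum_congr rfl fun x _ => ?_
      rw [mul_pow, hrt]
      congr 1
      have hV : ∀ W : E, ∀ k, W ^ (k * r * s) = W ^ k := by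
        intro W k
        rw [mul_assoc, ← hQ, mul_comm, pow_mul, FiniteField.pow_card]
      simp only [α2, β2, α1, β1]
      rw [mul_pow, ← pow_mul, ← pow_mul, add_mul, add_mul, pow_add, pow_add, hV, hV, pow_add,
        pow_add]
      ring
    rw [(pow_eq_zero_iff hs0).1 h4, mul_zero]
  have hvan2 : ∀ V ∈ T, ∀ ρ < M, (auxH M N D r α2 β2 γ' ρ).eval V = 0 := by
    intro V hV
    obtain ⟨hDV, U, hU, hDU⟩ := hT V hV
    set G : E[X] := ∑ ρ ∈ range M, monomial ρ ((auxH M N D r α2 β2 γ' ρ).eval V) with hG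
    have hG0 : G = 0 := by
      refine eq_zero_of_natDegree_lt_card_of_eval_eq_zero' G
        ((nthRootsFinset M (1 : E)).image (fun z => z * U)) ?_ ?_
      · intro w hw
        obtain ⟨z, hz, rfl⟩ := Finset.mem_image.1 hw
        rw [mem_nthRootsFinset hM] at hz
        rw [hG, eval_finsetSum]
        simp only [eval_monomial]
        exact hvan V (z * U) hDV (by rw [mul_pow, hz, one_mul, hDU])
      · rw [Finset.card_image_of_injective _ (mul_left_injective₀ hU), hζ.card_nthRootsFinset]
        refine lt_of_le_of_lt (natDegree_sum_le_of_forall_le (n := M - 1) _ _ ?_) (by omega)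
        intro ρ hρ
        rw [Finset.mem_range] at hρ
        exact (natDegree_monomial_le _).trans (by omega)
    intro ρ hρ
    have := congrArg (fun g => g.coeff ρ) hG0
    simpa [hG, finsetSum_coeff, coeff_monomial, hρ] using this
  have hex : ∃ ρ < M, auxH M N D r α2 β2 γ' ρ ≠ 0 := by
    by_contra hcon
    push Not at hcon
    have h1 := auxH_eval M hM N D r α2 β2 γ' he2 φ u hu'
    rw [Finset.sum_eq_zero (s := range M) (fun ρ hρ => by
      rw [hcon ρ (Finset.mem_range.1 hρ)]; simp)] at h1
    have h3 := (mul_eq_zero.1 h1).resolve_left (pow_ne_zero _ hD0)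
    have h4 := aux_nonvanish p ν r hr M hM ζ hζ N D hND δ hN hD π hπ hπN hπN2 φ hφC hφ hφ2 u hu'
      l m hlr (fun i j => γ' (i, j)) (by
        rw [Finset.sum_comm, ← h3]
        refine Eq.symm ((Fintype.sum_prod_type _).trans ?_)
        refine Finset.sum_congr rfl fun i _ => Finset.sum_congr rfl fun j _ => ?_
        simp only [α2, β2]
        rw [mul_pow, ← pow_mul, ← pow_mul, pow_add, pow_add]; ring)
    apply hγ0
    ext x
    have := congrFun (congrFun h4 x.1) x.2
    simp only [Pi.zero_apply] at this ⊢
    rw [← hrt (γ x), show rt (γ x) = 0 from this, zero_pow hs0]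
  obtain ⟨ρ, hρ, hne⟩ := hex
  calc T.card ≤ (auxH M N D r α2 β2 γ' ρ).natDegree := by
        by_contra hlt
        push Not at hlt
        exact hne (eq_zero_of_natDegree_lt_card_of_eval_eq_zero' _ T
          (fun V hV => hvan2 V hV ρ hρ) hlt)
    _ ≤ (m * r + l) + r * δ := auxH_natDegree M N D δ hN hD r _ α2 β2 γ' he2 hα2 ρ
    _ = l + (m + δ) * r := by ring


open Polynomial in
theorem stepanov_bound {E : Type*} [Field E] [Fintype E] (p ν σ r s : ℕ) [Fact p.Prime] [CharP E p]
    (hr : r = p ^ ν) (hs : s = p ^ σ) (hsr : s ≤ r) (hQ : Fintype.card E = r * s)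
    (M : ℕ) (hM : 0 < M) (hMd : (M : E) ≠ 0) (ζ : E) (hζ : IsPrimitiveRoot ζ M)
    (N D : E[X]) (hND : IsCoprime N D) (δ : ℕ) (hN : N.natDegree ≤ δ) (hD : D.natDegree ≤ δ)
    (π : E[X]) (hπ : Prime π) (hπN : π ∣ N) (hπN2 : ¬ π ^ 2 ∣ N)
    (T : Finset E) (hT : ∀ V ∈ T, D.eval V ≠ 0 ∧ ∃ U, U ≠ 0 ∧ D.eval V * U ^ M = N.eval V) :
    M * T.card ≤ Fintype.card E + M * ((3 * δ + 8 + M * (2 * δ + 4)) * r) := by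
  by_cases hL : 2 * δ + 4 ≤ r / M
  · set L := r / M with hLdef
    have hL1 : M * L ≤ r := Nat.mul_div_le r M
    have hL2 : r < M * (L + 1) := by
      rw [hLdef]; exact Nat.lt_mul_div_succ r hM
    obtain ⟨l, hl⟩ : ∃ l, L = l + δ + 1 := ⟨L - (δ + 1), by omega⟩
    set S := s / M with hSdef
    have hS1 : M * S ≤ s := Nat.mul_div_le s M
    have hS2 : s < M * (S + 1) := by
      rw [hSdef]; exact Nat.lt_mul_div_succ s hM
    have hrl : r < 2 * (M * l) := by
      calc r < M * (L + 1) := hL2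
        _ ≤ M * (2 * l) := Nat.mul_le_mul_left _ (by omega)
        _ = 2 * (M * l) := by ring
    have hLr : L ≤ r := (Nat.div_le_self r M)
    have hSs : S ≤ s := (Nat.div_le_self s M)
    have := stepanov p ν σ r s hr hs hQ M hM hMd ζ hζ N D hND δ hN hD π hπ hπN hπN2 l
      (S + 1 + (2 * δ + 6)) (by
        calc M * (l + δ) < M * L := Nat.mul_lt_mul_of_pos_left (by omega) hM
          _ ≤ r := hL1) (by
        have h1 : (l + δ) * s + (S + 1 + (2 * δ + 6)) < l * ((S + 1 + (2 * δ + 6)) * M) := by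
          have e : l * ((S + 1 + (2 * δ + 6)) * M) =
            l * (M * (S + 1)) + (δ + 3) * (2 * (M * l)) := by ring
          rw [e]
          have h2 : l * s ≤ l * (M * (S + 1)) := Nat.mul_le_mul_left _ hS2.le
          have h3 : (δ + 3) * r ≤ (δ + 3) * (2 * (M * l)) := Nat.mul_le_mul_left _ hrl.le
          have h4 : δ * s ≤ δ * r := Nat.mul_le_mul_left _ hsr
          nlinarith
        calc _ < M * (l * ((S + 1 + (2 * δ + 6)) * M)) := Nat.mul_lt_mul_of_pos_left h1 hM
          _ = _ := by ring) T hT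
    calc M * T.card ≤ M * (l + (S + 1 + (2 * δ + 6) + δ) * r) := Nat.mul_le_mul_left _ this
      _ = (M * S) * r + M * (l + (3 * δ + 7) * r) := by ring
      _ ≤ s * r + M * (r + (3 * δ + 7) * r) :=
        add_le_add (Nat.mul_le_mul_right _ hS1) (Nat.mul_le_mul_left _ (by omega))
      _ ≤ Fintype.card E + M * ((3 * δ + 8 + M * (2 * δ + 4)) * r) := by
        rw [hQ]
        have : M * (r + (3 * δ + 7) * r) ≤ M * ((3 * δ + 8 + M * (2 * δ + 4)) * r) :=
          Nat.mul_le_mul_left _ (by nlinarith [Nat.zero_le (M * (2 * δ + 4) * r)])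
        nlinarith
  · have h1 : r ≤ M * (2 * δ + 4) := by
      have := Nat.lt_mul_div_succ r hM
      refine this.le.trans (Nat.mul_le_mul_left _ (by omega))
    have h2 : T.card ≤ r * s := hQ ▸ Finset.card_le_univ T
    calc M * T.card ≤ M * (r * s) := Nat.mul_le_mul_left _ h2
      _ ≤ M * ((M * (2 * δ + 4)) * r) := Nat.mul_le_mul_left _ (by
          rw [mul_comm r s]; exact Nat.mul_le_mul_right _ (hsr.trans h1))
      _ ≤ M * ((3 * δ + 8 + M * (2 * δ + 4)) * r) :=
          Nat.mul_le_mul_left _ (Nat.mul_le_mul_right _ (by omega))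
      _ ≤ _ := Nat.le_add_left _ _

open Polynomial in
theorem count_bound {E : Type*} [Field E] [Fintype E] (p ν σ r s : ℕ) [Fact p.Prime] [CharP E p]
    (hr : r = p ^ ν) (hs : s = p ^ σ) (hsr : s ≤ r) (hQ : Fintype.card E = r * s)
    (M : ℕ) (hM : 0 < M) (hMd : (M : E) ≠ 0) (ζ : E) (hζ : IsPrimitiveRoot ζ M)
    (a1 a2 a3 a4 : E) (h12 : a1 ≠ a2) (h13 : a1 ≠ a3) (h23 : a2 ≠ a3)
    (h34 : a3 ≠ a4) (c e : E) (hc : c ≠ 0) (he : e ≠ 0)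
    (Θ : Finset E) (hΘ : ∀ θ ∈ Θ, θ ≠ a2 ∧ θ ≠ a4 ∧
      (∃ t, t ≠ 0 ∧ a1 - θ = c * t ^ M * (a2 - θ)) ∧
      (∃ t, t ≠ 0 ∧ a3 - θ = e * t ^ M * (a4 - θ))) :
    M * (M * Θ.card) ≤ Fintype.card E + M * ((3 * M + 8 + M * (2 * M + 4)) * r) := by
  set N : E[X] := C (a3 - a1) - C (c * (a3 - a2)) * X ^ M with hN
  set D : E[X] := C e * (C (a4 - a1) - C (c * (a4 - a2)) * X ^ M) with hD
  have hcop : IsCoprime N D := by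
    have hk : c * e * ((a1 - a2) * (a3 - a4)) ≠ 0 :=
      mul_ne_zero (mul_ne_zero hc he) (mul_ne_zero (sub_ne_zero.2 h12) (sub_ne_zero.2 h34))
    refine ⟨C ((c * e * ((a1 - a2) * (a3 - a4)))⁻¹ * (e * (c * (a4 - a2)))),
      C ((c * e * ((a1 - a2) * (a3 - a4)))⁻¹ * (-(c * (a3 - a2)))), ?_⟩
    have : C ((c * e * ((a1 - a2) * (a3 - a4)))⁻¹) * C (c * e * ((a1 - a2) * (a3 - a4))) =
        (1 : E[X]) := by
      rw [← C_mul, inv_mul_cancel₀ hk, C_1]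
    rw [← this, hN, hD]
    simp only [C_mul, C_sub, C_neg]
    ring
  have hdeg : ∀ x y : E, (C x - C y * X ^ M : E[X]).natDegree ≤ M := by
    intro x y
    refine (natDegree_sub_le _ _).trans ?_
    simp only [natDegree_C]
    exact max_le (by omega) (natDegree_C_mul_X_pow_le _ _)
  have hB : c * (a3 - a2) ≠ 0 := mul_ne_zero hc (sub_ne_zero.2 h23.symm)
  have hA : (a3 - a1) ≠ 0 := sub_ne_zero.2 h13.symm
  have hNeq : N = C (-(c * (a3 - a2))) * (X ^ M - C ((a3 - a1) / (c * (a3 - a2)))) := by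
    rw [mul_sub, ← C_mul, hN]
    have : -(c * (a3 - a2)) * ((a3 - a1) / (c * (a3 - a2))) = -(a3 - a1) := by
      field_simp
    rw [this]
    simp only [C_neg]
    ring
  have hsep : (X ^ M - C ((a3 - a1) / (c * (a3 - a2)))).Separable :=
    separable_X_pow_sub_C _ hMd (div_ne_zero hA hB)
  obtain ⟨π, hπirr, hπd⟩ : ∃ π : E[X], Irreducible π ∧
      π ∣ (X ^ M - C ((a3 - a1) / (c * (a3 - a2)))) := by
    apply exists_irreducible_of_natDegree_pos
    rw [natDegree_X_pow_sub_C]; exact hM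
  have hunit : IsUnit (C (-(c * (a3 - a2)))) := isUnit_C.2 (neg_ne_zero.2 hB).isUnit
  -- choose roots
  have hch : ∀ θ : E, ∃ t, θ ∈ Θ → t ≠ 0 ∧ a1 - θ = c * t ^ M * (a2 - θ) := by
    intro θ
    by_cases h : θ ∈ Θ
    · obtain ⟨t, ht⟩ := (hΘ θ h).2.2.1
      exact ⟨t, fun _ => ht⟩
    · exact ⟨0, fun h' => absurd h' h⟩
  choose t ht using hch
  set T : Finset E := (Θ ×ˢ nthRootsFinset M (1 : E)).image (fun x => t x.1 * x.2) with hTdef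
  have hcard : T.card = Θ.card * M := by
    rw [hTdef, Finset.card_image_of_injOn, Finset.card_product, hζ.card_nthRootsFinset]
    rintro ⟨θ, z⟩ h1 ⟨θ', z'⟩ h2 heq
    simp only [Finset.coe_product, Set.mem_prod, Finset.mem_coe, mem_nthRootsFinset hM] at h1 h2
    simp only at heq
    obtain ⟨h3, h4⟩ := ht θ h1.1
    obtain ⟨h5, h6⟩ := ht θ' h2.1
    have h7 : t θ ^ M = t θ' ^ M := by
      have := congrArg (fun w => w ^ M) heq
      simpa [mul_pow, h1.2, h2.2] using this
    have h8 : θ = θ' := by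
      rw [h7] at h4
      have h9 : (1 - c * t θ' ^ M) * (θ - θ') = 0 := by linear_combination h6 - h4
      rcases mul_eq_zero.1 h9 with h | h
      · exfalso
        apply h12
        linear_combination h4 - (a2 - θ) * h
      · exact sub_eq_zero.1 h
    subst h8
    exact Prod.ext rfl (mul_left_cancel₀ h3 heq)
  have := stepanov_bound p ν σ r s hr hs hsr hQ M hM hMd ζ hζ N D hcop M (hdeg _ _)
    ((natDegree_C_mul_le _ _).trans (hdeg _ _)) π hπirr.prime
    (hNeq ▸ Dvd.dvd.mul_left hπd _) (by
      intro h
      rw [hNeq, hunit.dvd_mul_left, sq] at h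
      exact hπirr.not_isUnit (hsep.squarefree _ h)) T (by
      intro V hV
      rw [hTdef, Finset.mem_image] at hV
      obtain ⟨⟨θ, z⟩, hmem, rfl⟩ := hV
      simp only [Finset.mem_product, mem_nthRootsFinset hM] at hmem
      obtain ⟨hθ, hz⟩ := hmem
      obtain ⟨g1, g2, -, U, hU, hUe⟩ := hΘ θ hθ
      obtain ⟨h3, h4⟩ := ht θ hθ
      have hx : (t θ * z) ^ M = t θ ^ M := by rw [mul_pow, hz, mul_one]
      have hx1 : 1 - c * t θ ^ M ≠ 0 := by
        intro h
        apply h12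
        linear_combination h4 - (a2 - θ) * h
      have hDV : D.eval (t θ * z) = e * ((a4 - θ) * (1 - c * t θ ^ M)) := by
        simp only [hD, eval_mul, eval_sub, eval_C, eval_pow, eval_X, hx]
        linear_combination (-e) * h4
      have hNV : N.eval (t θ * z) = (a3 - θ) * (1 - c * t θ ^ M) := by
        simp only [hN, eval_mul, eval_sub, eval_C, eval_pow, eval_X, hx]
        linear_combination (-1) * h4
      refine ⟨?_, U, hU, ?_⟩
      · rw [hDV]; exact mul_ne_zero he (mul_ne_zero (sub_ne_zero.2 g2.symm) hx1)
      · rw [hDV, hNV, hUe]; ring)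
  rwa [hcard, mul_comm Θ.card M] at this


theorem char_sum_E {E : Type*} [Field E] [Fintype E] (p ν σ r s : ℕ) [Fact p.Prime] [CharP E p]
    (hr : r = p^ν) (hs : s = p^σ) (hsr : s ≤ r) (hQ : Fintype.card E = r*s)
    (M : ℕ) (hM : 0 < M) (hMd : M ∣ Fintype.card E - 1)
    (a1 a2 a3 a4 : E) (h12 : a1≠a2) (h13 : a1≠a3) (h23 : a2≠a3) (h34 : a3≠a4)
    (χ ψ : MulChar E ℂ) (hχ : χ ≠ 1) (hχM : χ ^ M = 1) (hψM : ψ ^ M = 1) :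
    ‖∑ θ : E, χ (a1 - θ) * χ⁻¹ (a2 - θ) * (ψ (a3 - θ) * ψ⁻¹ (a4 - θ))‖
      ≤ 2 * (M * ((3*M+8+M*(2*M+4))*r)) + 4 := by
  have hQ1 : 1 < Fintype.card E := Fintype.one_lt_card
  have hcu : Nat.card Eˣ = Fintype.card E - 1 := by
    rw [Nat.card_units, Nat.card_eq_fintype_card]
  have hME : (M : E) ≠ 0 := by
    intro h0
    obtain ⟨c, hc⟩ := hMd
    have h1 : ((Fintype.card E - 1 : ℕ) : E) = 0 := by rw [hc]; push_cast; rw [h0, zero_mul]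
    rw [Nat.cast_sub hQ1.le, FiniteField.cast_card_eq_zero] at h1
    simp at h1
  obtain ⟨ζ, hζ⟩ : ∃ ζ : E, IsPrimitiveRoot ζ M := by
    obtain ⟨g, hg⟩ := IsCyclic.exists_generator (α := Eˣ)
    have ho : orderOf g = Fintype.card E - 1 := by
      rw [orderOf_eq_card_of_forall_mem_zpowers hg, hcu]
    obtain ⟨c, hc⟩ := hMd
    have : IsPrimitiveRoot (g : E) (Fintype.card E - 1) := by
      rw [IsPrimitiveRoot.coe_units_iff, ← ho]; exact IsPrimitiveRoot.orderOf g
    exact ⟨_, this.pow (by omega) (by rw [hc, mul_comm])⟩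
  set R : Subgroup Eˣ := (powMonoidHom M : Eˣ →* Eˣ).range with hR
  have hRi : R.index = M := by
    rw [hR, IsCyclic.index_powMonoidHom_range, hcu]
    exact Nat.gcd_eq_right hMd
  let H := Eˣ ⧸ R
  have hfin : Finite H := inferInstance
  let _ : Fintype H := Fintype.ofFinite H
  have hH : Fintype.card H = M := by
    rw [← Nat.card_eq_fintype_card, ← hRi]; rfl
  have lift : ∀ χ : MulChar E ℂ, χ ^ M = 1 → ∃ φ : H →* ℂ, ∀ u : Eˣ, φ (u : H) = χ u := by
    intro χ hχ
    refine ⟨(Units.coeHom ℂ).comp (QuotientGroup.lift R χ.toUnitHom ?_), ?_⟩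
    · rintro _ ⟨t, rfl⟩
      ext
      simp only [powMonoidHom_apply, map_pow, Units.val_pow_eq_pow_val, MulChar.coe_toUnitHom, Units.val_one]
      rw [← MulChar.pow_apply_coe, hχ, MulChar.one_apply_coe]
    · intro u
      rw [MonoidHom.comp_apply, QuotientGroup.lift_mk]
      exact MulChar.coe_toUnitHom χ u
  obtain ⟨φ, hφ⟩ := lift χ hχM
  obtain ⟨φ', hφ'⟩ := lift ψ hψM
  have hφ1 : φ ≠ 1 := by
    rintro rfl
    apply hχ
    ext u
    rw [← hφ u, MulChar.one_apply_coe]; rfl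
  have hsum : ∑ v : H, φ v = 0 := sum_hom_units_eq_zero φ hφ1
  -- class map
  let κ : E → H := fun x => if h : x = 0 then 1 else ((Units.mk0 x h : Eˣ) : H)
  have hκ : ∀ x : E, ∀ h : x ≠ 0, κ x = ((Units.mk0 x h : Eˣ) : H) := fun x h => dif_neg h
  have hχκ : ∀ x : E, x ≠ 0 → χ x = φ (κ x) := by
    intro x h; rw [hκ x h, hφ]; rfl
  have hψκ : ∀ x : E, x ≠ 0 → ψ x = φ' (κ x) := by
    intro x h; rw [hκ x h, hφ']; rfl
  have hκdiv : ∀ x y : E, x ≠ 0 → y ≠ 0 → κ (x / y) = κ x / κ y := by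
    intro x y hx hy
    rw [hκ x hx, hκ y hy, hκ (x/y) (div_ne_zero hx hy), ← QuotientGroup.mk_div]
    congr 1; ext; simp
  have hκpow : ∀ x y : E, x ≠ 0 → y ≠ 0 → κ x = κ y → ∃ t : E, t ≠ 0 ∧ x = y * t ^ M := by
    intro x y hx hy h
    rw [hκ x hx, hκ y hy, eq_comm, QuotientGroup.eq] at h
    obtain ⟨t, ht⟩ := h
    refine ⟨t, t.ne_zero, ?_⟩
    have := congrArg (Units.val) ht
    simp at this
    rw [this]; field_simp
  have hinv : ∀ χ : MulChar E ℂ, ∀ x y : E, χ x * χ⁻¹ y = χ (x / y) := by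
    intro χ x y
    rw [MulChar.inv_apply', div_eq_mul_inv, map_mul]
  let T : Finset E := univ.filter fun θ => θ ≠ a1 ∧ θ ≠ a2 ∧ θ ≠ a3 ∧ θ ≠ a4
  have hTc : Fintype.card E ≤ T.card + 4 := by
    have : (univ : Finset E) ⊆ T ∪ {a1, a2, a3, a4} := by
      intro x _
      simp only [T, mem_union, mem_filter, mem_univ, true_and, mem_insert, mem_singleton]
      tauto
    have h1 := card_le_card this
    have h2 := card_union_le T {a1, a2, a3, a4}
    have h3 : ({a1, a2, a3, a4} : Finset E).card ≤ 4 := card_le_four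
    rw [card_univ] at h1; omega
  have hTc' : T.card ≤ Fintype.card E := card_le_univ T
  let pr : E → H × H := fun θ => (κ ((a1-θ)/(a2-θ)), κ ((a3-θ)/(a4-θ)))
  let N : H × H → ℕ := fun v => (T.filter fun θ => pr θ = v).card
  have hN : ∑ v, N v = T.card := by
    rw [card_eq_sum_card_fiberwise (f := pr) (t := univ)]
    intro x _; simp
  have hS : ∑ θ : E, χ (a1 - θ) * χ⁻¹ (a2 - θ) * (ψ (a3 - θ) * ψ⁻¹ (a4 - θ))
      = ∑ v : H × H, φ v.1 * φ' v.2 * (N v : ℂ) := by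
    have e1 : ∑ θ : E, χ (a1 - θ) * χ⁻¹ (a2 - θ) * (ψ (a3 - θ) * ψ⁻¹ (a4 - θ))
       = ∑ θ ∈ T, φ (pr θ).1 * φ' (pr θ).2 := by
      symm
      rw [← sum_subset (subset_univ T)]
      · apply sum_congr rfl
        intro θ hθ
        simp only [T, mem_filter, mem_univ, true_and] at hθ
        rw [hinv, hinv, hχκ, hψκ]
        · exact div_ne_zero (sub_ne_zero.2 hθ.2.2.1.symm) (sub_ne_zero.2 hθ.2.2.2.symm)
        · exact div_ne_zero (sub_ne_zero.2 hθ.1.symm) (sub_ne_zero.2 hθ.2.1.symm)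
      · intro θ _ hθ
        simp only [T, mem_filter, mem_univ, true_and] at hθ
        rw [hinv, hinv]
        by_cases h1 : θ = a1
        · simp [h1, MulChar.map_zero]
        by_cases h2 : θ = a2
        · simp [h2, MulChar.map_zero]
        by_cases h3 : θ = a3
        · simp [h3, MulChar.map_zero]
        by_cases h4 : θ = a4
        · simp [h4, MulChar.map_zero]
        tauto
    rw [e1, ← sum_fiberwise T pr]
    apply sum_congr rfl
    intro v _
    rw [sum_congr rfl (g := fun _ => φ v.1 * φ' v.2), sum_const, nsmul_eq_mul, mul_comm]
    intro θ hθ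
    rw [(mem_filter.1 hθ).2]
  set D : ℝ := ((3*M+8+M*(2*M+4))*r) / M with hD
  have hMR : (0:ℝ) < M := by exact_mod_cast hM
  have hD0 : 0 ≤ D := by rw [hD]; positivity
  have hNb : ∀ v, (N v : ℝ) ≤ Fintype.card E / (M:ℝ)^2 + D := by
    intro v
    have key : M*(M*N v) ≤ Fintype.card E + M*((3*M+8+M*(2*M+4))*r) := by
      rcases (T.filter fun θ => pr θ = v).eq_empty_or_nonempty with h | ⟨θ0, h0⟩
      · have : N v = 0 := by simp only [N]; rw [h, card_empty]
        rw [this]; simp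
      · have h0' := h0
        simp only [T, mem_filter, mem_univ, true_and] at h0
        obtain ⟨⟨b1, b2, b3, b4⟩, b5⟩ := h0
        have c1 := div_ne_zero (sub_ne_zero.2 b1.symm) (sub_ne_zero.2 b2.symm)
        have c2 := div_ne_zero (sub_ne_zero.2 b3.symm) (sub_ne_zero.2 b4.symm)
        refine count_bound p ν σ r s hr hs hsr hQ M hM hME ζ hζ a1 a2 a3 a4 h12 h13 h23 h34
          ((a1-θ0)/(a2-θ0)) ((a3-θ0)/(a4-θ0)) c1 c2 _ ?_
        intro θ hθ
        simp only [T, mem_filter, mem_univ, true_and] at hθ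
        obtain ⟨⟨d1, d2, d3, d4⟩, d5⟩ := hθ
        have d6 : pr θ = pr θ0 := by rw [d5, b5]
        have d7 : κ ((a1-θ)/(a2-θ)) = κ ((a1-θ0)/(a2-θ0)) := congrArg Prod.fst d6
        have d8 : κ ((a3-θ)/(a4-θ)) = κ ((a3-θ0)/(a4-θ0)) := congrArg Prod.snd d6
        have f2 := sub_ne_zero.2 d2.symm
        have f4 := sub_ne_zero.2 d4.symm
        refine ⟨d2, d4, ?_, ?_⟩
        · obtain ⟨t, ht, h⟩ := hκpow _ _ (div_ne_zero (sub_ne_zero.2 d1.symm) f2) c1 d7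
          exact ⟨t, ht, by rw [← h]; field_simp⟩
        · obtain ⟨t, ht, h⟩ := hκpow _ _ (div_ne_zero (sub_ne_zero.2 d3.symm) f4) c2 d8
          exact ⟨t, ht, by rw [← h]; field_simp⟩
    have key' : (M:ℝ)*(M*N v) ≤ Fintype.card E + M*((3*M+8+M*(2*M+4))*r) := by exact_mod_cast key
    rw [hD]
    have : (Fintype.card E : ℝ) / (M:ℝ)^2 + ((3*M+8+M*(2*M+4))*r) / M =
       (Fintype.card E + M*((3*M+8+M*(2*M+4))*r)) / (M:ℝ)^2 := by field_simp
    rw [this, le_div_iff₀ (by positivity)]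
    nlinarith
  have hφn : ∀ φ : H →* ℂ, ∀ v, ‖φ v‖ = 1 := by
    intro φ v
    have : (φ v) ^ Fintype.card H = 1 := by rw [← map_pow, pow_card_eq_one, map_one]
    exact Complex.norm_eq_one_of_pow_eq_one this Fintype.card_ne_zero
  have hzero : ∑ v : H × H, φ v.1 * φ' v.2 * ((Fintype.card E / (M:ℝ)^2 : ℝ) : ℂ) = 0 := by
    rw [← sum_mul, Fintype.sum_prod_type]
    simp only [← mul_sum]
    rw [← sum_mul, hsum]; simp
  rw [hS, ← sub_zero (∑ v : H × H, _), ← hzero, ← sum_sub_distrib]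
  calc _ ≤ ∑ v : H × H, (2 * D - ((N v : ℝ) - Fintype.card E / (M:ℝ)^2)) := by
        apply norm_sum_le_of_le
        intro v _
        rw [← mul_sub, norm_mul, norm_mul, hφn, hφn, one_mul, one_mul]
        rw [← Complex.ofReal_natCast, ← Complex.ofReal_sub, Complex.norm_real, Real.norm_eq_abs, abs_le]
        constructor <;> linarith [hNb v]
    _ = 2 * M^2 * D - T.card + Fintype.card E := by
        rw [sum_sub_distrib, sum_sub_distrib, sum_const, sum_const, ← Nat.cast_sum, hN, card_univ,
          Fintype.card_prod, hH]
        simp only [nsmul_eq_mul]; push_cast; field_simp; ring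
    _ ≤ _ := by
        have : (Fintype.card E : ℝ) ≤ T.card + 4 := by exact_mod_cast hTc
        have h2 : 2 * (M:ℝ)^2 * D = 2 * (M * ((3*M+8+M*(2*M+4))*r)) := by rw [hD]; field_simp
        rw [h2]; linarith

theorem char_sum_ext {F : Type*} [Field F] [Fintype F] {E : Type*} [Field E] [Fintype E] [Algebra F E]
    (n : ℕ) (hn : 0 < n) (hcard : Fintype.card E = Fintype.card F ^ n)
    (a1 a2 a3 a4 : F) (h12 : a1≠a2) (h13 : a1≠a3) (h23 : a2≠a3) (h34 : a3≠a4)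
    (χ ψ : MulChar F ℂ) (hχ : χ ≠ 1) :
    ‖∑ θ : E, χ (Algebra.norm F (algebraMap F E a1 - θ)) * χ⁻¹ (Algebra.norm F (algebraMap F E a2 - θ)) *
       (ψ (Algebra.norm F (algebraMap F E a3 - θ)) * ψ⁻¹ (Algebra.norm F (algebraMap F E a4 - θ)))‖
      ≤ (2 * ((Fintype.card F) * ((3*(Fintype.card F)+8+(Fintype.card F)*(2*(Fintype.card F)+4))*(Fintype.card F))) + 4) * (Real.sqrt (Fintype.card F)) ^ n := by
  obtain ⟨p, hpc, f, hp, hf⟩ := FiniteField.card' F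
  have : Fact p.Prime := ⟨hp⟩
  have : CharP E p := charP_of_injective_algebraMap (algebraMap F E).injective p
  set q := Fintype.card F with hq
  have hq1 : 1 < q := Fintype.one_lt_card
  have hex : ∀ χ : MulChar F ℂ, ∃ χ' : MulChar E ℂ, (∀ x, χ' x = χ (Algebra.norm F x)) := by
    intro χ
    refine ⟨MulChar.ofUnitHom (χ.toUnitHom.comp (Units.map (Algebra.norm F (S := E)))), ?_⟩
    intro x
    by_cases hx : x = 0
    · rw [hx, MulChar.map_zero, Algebra.norm_zero, MulChar.map_zero]
    · obtain ⟨u, rfl⟩ := IsUnit.mk0 x hx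
      rw [MulChar.ofUnitHom_coe, MonoidHom.comp_apply, MulChar.coe_toUnitHom]; rfl
  have hpow : ∀ χ : MulChar F ℂ, χ ^ (q - 1) = 1 := by
    intro χ
    ext u
    rw [MulChar.pow_apply_coe, MulChar.one_apply_coe, ← map_pow]
    rw [FiniteField.pow_card_sub_one_eq_one _ u.ne_zero, map_one]
  have hpowE : ∀ χ' : MulChar E ℂ, ∀ χ : MulChar F ℂ, (∀ x, χ' x = χ (Algebra.norm F x)) →
      χ' ^ (q-1) = 1 := by
    intro χ' χ h
    ext u
    rw [MulChar.pow_apply_coe, MulChar.one_apply_coe, h, ← map_pow]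
    rw [FiniteField.pow_card_sub_one_eq_one, map_one]
    exact Algebra.norm_ne_zero_iff.2 u.ne_zero
  obtain ⟨χ', hχ'⟩ := hex χ
  obtain ⟨ψ', hψ'⟩ := hex ψ
  have hinv : ∀ χ' : MulChar E ℂ, ∀ χ : MulChar F ℂ, (∀ x, χ' x = χ (Algebra.norm F x)) →
      ∀ x, χ'⁻¹ x = χ⁻¹ (Algebra.norm F x) := by
    intro χ' χ h x
    rw [MulChar.inv_apply', MulChar.inv_apply', h, Algebra.norm_inv]
  have hχ1 : χ' ≠ 1 := by
    rintro rfl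
    apply hχ
    ext u
    obtain ⟨v, hv⟩ := FiniteField.unitsMap_norm_surjective F E u
    have h1 := hχ' v
    have h2 : Algebra.norm F (v : E) = u := congrArg Units.val hv
    rw [h2, MulChar.one_apply_coe] at h1
    rw [← h1, MulChar.one_apply_coe]
  have inj := (algebraMap F E).injective
  have main := char_sum_E p (f * ((n+1)/2)) (f*(n/2)) (q^((n+1)/2)) (q^(n/2)) (by rw [hf, pow_mul])
    (by rw [hf, pow_mul]) (Nat.pow_le_pow_right hq1.le (by omega))
    (by rw [hcard, ← pow_add]; congr 1; omega) (q-1) (by omega)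
    (by rw [hcard]; simpa using Nat.sub_dvd_pow_sub_pow q 1 n)
    (algebraMap F E a1) (algebraMap F E a2) (algebraMap F E a3) (algebraMap F E a4)
    (inj.ne h12) (inj.ne h13) (inj.ne h23) (inj.ne h34) χ' ψ' hχ1 (hpowE _ _ hχ') (hpowE _ _ hψ')
  simp only [hinv χ' χ hχ', hinv ψ' ψ hψ', hχ', hψ'] at main
  refine main.trans ?_
  have hMq : ((q-1 : ℕ) : ℝ) ≤ q := by exact_mod_cast Nat.sub_le q 1
  have hq1' : (1:ℝ) ≤ q := by exact_mod_cast hq1.le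
  have hs1 : 1 ≤ Real.sqrt q := by rw [Real.one_le_sqrt]; exact hq1'
  have hsq : Real.sqrt q ≤ q := by rw [Real.sqrt_le_left (by linarith)]; nlinarith
  have hss : Real.sqrt q ^ 2 = q := Real.sq_sqrt (by linarith)
  have hr : ((q ^ ((n+1)/2) : ℕ) : ℝ) ≤ q * Real.sqrt q ^ n := by
    push_cast
    calc (q:ℝ) ^ ((n+1)/2) = Real.sqrt q ^ (2*((n+1)/2)) := by rw [pow_mul, hss]
      _ ≤ Real.sqrt q ^ (n+1) := pow_le_pow_right₀ hs1 (by omega)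
      _ = Real.sqrt q * Real.sqrt q ^ n := by rw [pow_succ]; ring
      _ ≤ _ := by gcongr
  have h1 : (1:ℝ) ≤ Real.sqrt q ^ n := one_le_pow₀ hs1
  calc _ ≤ 2 * ((q:ℝ) * ((3*q+8+q*(2*q+4))*(q * Real.sqrt q ^ n))) + 4 := by gcongr
    _ ≤ _ := by nlinarith


open Polynomial in
theorem ana_key (c S : ℕ → ℂ) (C ρ : ℝ) (hρ : 0 < ρ) (h0 : c 0 = 1) (h4 : ∀ n, 4 ≤ n → c n = 0)
    (hrec : ∀ n : ℕ, ((n:ℂ)+1) * c (n+1) = ∑ i ∈ range (n+1), S i * c (n - i))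
    (hS : ∀ i, ‖S i‖ ≤ C * ρ ^ (i+1)) (T0 : ℂ)
    (hroot : 1 + c 1 * T0 + c 2 * T0^2 + c 3 * T0^3 = 0) : 1 ≤ ρ * ‖T0‖ := by
  by_contra! hlt
  obtain ⟨r, hr1, hr2⟩ : ∃ r : ℝ, ‖T0‖ < r ∧ r < 1 / ρ := exists_between (by
    rw [lt_div_iff₀ hρ]; linarith)
  have hr0 : 0 < r := (norm_nonneg _).trans_lt hr1
  have hrρ : r * ρ < 1 := by rwa [lt_div_iff₀ hρ] at hr2
  set L : ℂ[X] := Polynomial.C 1 + Polynomial.C (c 1) * X + Polynomial.C (c 2) * X^2 + Polynomial.C (c 3) * X^3 with hL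
  have hLe : ∀ T, L.eval T = 1 + c 1 * T + c 2 * T^2 + c 3 * T^3 := by
    intro T; simp [hL]
  have hLd : ∀ T, (derivative L).eval T = c 1 + 2 * c 2 * T + 3 * c 3 * T^2 := by
    intro T; simp [hL]; ring
  have hL0 : L ≠ 0 := by
    intro h
    have := hLe 0
    rw [h] at this; simp at this
  have hb : Summable fun i : ℕ => (C * ρ) * (r*ρ)^i :=
    (summable_geometric_of_lt_one (by positivity) hrρ).mul_left _
  have hbd : ∀ T : ℂ, ‖T‖ ≤ r → ∀ i, ‖S i * T^i‖ ≤ (C * ρ) * (r*ρ)^i := by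
    intro T hT i
    rw [norm_mul, norm_pow]
    calc _ ≤ (C * ρ^(i+1)) * r^i := by
          apply mul_le_mul (hS i) (by gcongr) (by positivity) ((norm_nonneg _).trans (hS i))
      _ = _ := by rw [mul_pow]; ring
  have hsum : ∀ T : ℂ, ‖T‖ ≤ r → Summable fun i => ‖S i * T^i‖ := fun T hT =>
    Summable.of_nonneg_of_le (fun _ => norm_nonneg _) (hbd T hT) hb
  set B := ∑' i : ℕ, (C * ρ) * (r*ρ)^i with hB
  have hσ : ∀ T : ℂ, ‖T‖ ≤ r → ‖∑' i, S i * T^i‖ ≤ B := by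
    intro T hT
    exact (norm_tsum_le_tsum_norm (hsum T hT)).trans ((hsum T hT).tsum_le_tsum (hbd T hT) hb)
  have hode : ∀ T : ℂ, ‖T‖ ≤ r → (derivative L).eval T = L.eval T * ∑' i, S i * T^i := by
    intro T hT
    have e1 : L.eval T = ∑' n, c n * T^n := by
      rw [tsum_eq_sum (s := range 4), hLe]
      · simp [sum_range_succ, h0]
      · intro n hn
        rw [h4 n (by simpa using hn), zero_mul]
    have e2 : (derivative L).eval T = ∑' n : ℕ, ((n:ℂ)+1) * c (n+1) * T^n := by
      rw [tsum_eq_sum (s := range 3), hLd]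
      · simp [sum_range_succ]; ring
      · intro n hn
        rw [h4 (n+1) (by simpa using hn), mul_zero, zero_mul]
    have s1 : Summable fun n => ‖c n * T^n‖ := by
      apply summable_of_ne_finset_zero (s := range 4)
      intro n hn
      rw [h4 n (by simpa using hn), zero_mul, norm_zero]
    rw [e1, e2, mul_comm, tsum_mul_tsum_eq_tsum_sum_range_of_summable_norm (hsum T hT) s1]
    apply tsum_congr
    intro n
    rw [hrec, sum_mul]
    apply sum_congr rfl
    intro i hi
    have : n = i + (n - i) := by simp at hi; omega
    have h2 : T^n = T^i * T^(n-i) := by rw [← pow_add, ← this]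
    rw [h2]; ring
  obtain ⟨R, hR, hRd⟩ := exists_eq_pow_rootMultiplicity_mul_and_not_dvd L hL0 T0
  set m := rootMultiplicity T0 L with hm
  have hm1 : 0 < m := (rootMultiplicity_pos hL0).2 (by rw [IsRoot, hLe, hroot])
  have hR0 : R.eval T0 ≠ 0 := by rwa [dvd_iff_isRoot] at hRd
  have hineq : ∀ T : ℂ, ‖T‖ ≤ r → T ≠ T0 →
      ‖(m:ℂ) * R.eval T + (T - T0) * (derivative R).eval T‖ ≤ ‖T - T0‖ * ‖R.eval T‖ * B := by
    intro T hT hne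
    have h1 := hode T hT
    have hne' : T - T0 ≠ 0 := sub_ne_zero.2 hne
    rw [hR] at h1
    obtain ⟨j, hj⟩ : ∃ j, m = j + 1 := ⟨m - 1, by omega⟩
    rw [hj] at h1
    simp only [derivative_mul, derivative_X_sub_C_pow, eval_add, eval_mul, eval_pow, eval_sub, eval_X, eval_C,
      eval_natCast] at h1
    have h2 : ((m:ℂ) * R.eval T + (T - T0) * (derivative R).eval T) = (T - T0) * R.eval T * ∑' i, S i * T^i := by
      apply mul_left_cancel₀ (pow_ne_zero j hne')
      rw [hj]
      simp only [Nat.add_sub_cancel] at h1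
      linear_combination h1
    rw [h2, norm_mul, norm_mul]
    gcongr
    exact hσ T hT
  have lim : ‖(m:ℂ) * R.eval T0 + (T0 - T0) * (derivative R).eval T0‖ ≤ ‖T0 - T0‖ * ‖R.eval T0‖ * B := by
    apply le_of_tendsto_of_tendsto (b := nhdsWithin T0 {T0}ᶜ)
      (f := fun T => ‖(m:ℂ) * R.eval T + (T - T0) * (derivative R).eval T‖)
      (g := fun T => ‖T - T0‖ * ‖R.eval T‖ * B)
    · apply Filter.Tendsto.mono_left _ nhdsWithin_le_nhds
      apply Continuous.tendsto
      fun_prop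
    · apply Filter.Tendsto.mono_left _ nhdsWithin_le_nhds
      apply Continuous.tendsto
      fun_prop
    · have : ∀ᶠ T in nhds T0, ‖T‖ ≤ r := by
        have := (continuous_norm (E := ℂ)).tendsto T0 |>.eventually (gt_mem_nhds hr1)
        exact this.mono fun _ h => h.le
      filter_upwards [self_mem_nhdsWithin, nhdsWithin_le_nhds this] with T h1 h2
      exact hineq T h2 h1
  simp only [sub_self, zero_mul, add_zero, norm_zero, norm_mul, Complex.norm_natCast] at lim
  have h1 : 0 < ‖R.eval T0‖ := norm_pos_iff.2 hR0
  have h2 : (0:ℝ) < m := by exact_mod_cast hm1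
  exact absurd lim (not_le.2 (mul_pos h2 h1))

open Polynomial in
theorem ana_main (c S : ℕ → ℂ) (C ρ : ℝ) (hρ : 0 < ρ) (h0 : c 0 = 1) (h4 : ∀ n, 4 ≤ n → c n = 0)
    (hrec : ∀ n : ℕ, ((n:ℂ)+1) * c (n+1) = ∑ i ∈ range (n+1), S i * c (n - i))
    (hS : ∀ i, ‖S i‖ ≤ C * ρ ^ (i+1)) : ‖c 1‖ ≤ 3 * ρ := by
  set P : Cubic ℂ := ⟨1, c 1, c 2, c 3⟩ with hP
  obtain ⟨x, y, z, h⟩ := (Cubic.splits_iff_roots_eq_three (P := P) (φ := RingHom.id ℂ) one_ne_zero).1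
    (IsAlgClosed.splits _)
  have hb := Cubic.b_eq_three_roots (P := P) (φ := RingHom.id ℂ) one_ne_zero h
  have hroot : ∀ t ∈ (Cubic.map (RingHom.id ℂ) P).roots, ‖t‖ ≤ ρ := by
    intro t ht
    by_cases ht0 : t = 0
    · rw [ht0, norm_zero]; exact hρ.le
    rw [Cubic.mem_roots_iff] at ht
    · simp [hP, Cubic.map] at ht
      have := ana_key c S C ρ hρ h0 h4 hrec hS t⁻¹ (by field_simp; linear_combination ht)
      rw [norm_inv, ← div_eq_mul_inv, le_div_iff₀ (norm_pos_iff.2 ht0)] at this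
      linarith
    · apply Cubic.ne_zero_of_a_ne_zero; simp [hP, Cubic.map]
  rw [h] at hroot
  have hx := hroot x (by simp)
  have hy := hroot y (by simp)
  have hz := hroot z (by simp)
  simp [hP] at hb
  rw [hb]
  calc _ ≤ ‖x‖ + ‖y‖ + ‖z‖ := by
        have := norm_add₃_le (a := x) (b := y) (c := z)
        rw [← norm_neg]
        refine le_trans (le_of_eq ?_) this
        congr 1; ring
    _ ≤ _ := by linarith


open Polynomial IntermediateField in
theorem norm_pow_minpoly {F E : Type*} [Field F] [Field E] [Algebra F E] [FiniteDimensional F E] (θ : E) (a : F) :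
    Algebra.norm F (algebraMap F E a - θ) =
      ((minpoly F θ) ^ (Module.finrank F E / (minpoly F θ).natDegree)).eval a := by
  set x : E := θ - algebraMap F E a with hx
  have hint : IsIntegral F x := IsIntegral.of_finite F x
  have hmin : minpoly F x = (minpoly F θ).comp (X + C a) := minpoly.sub_algebraMap θ a
  have hdeg : (minpoly F x).natDegree = (minpoly F θ).natDegree := by
    rw [hmin, natDegree_comp, natDegree_X_add_C, mul_one]
  have hdim : Module.finrank F F⟮x⟯ = (minpoly F θ).natDegree := by
    rw [adjoin.finrank hint, hdeg]
  have hpos : 0 < (minpoly F θ).natDegree := minpoly.natDegree_pos (IsIntegral.of_finite F θ)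
  have hfr : Module.finrank F E = (minpoly F θ).natDegree * Module.finrank F⟮x⟯ E := by
    rw [← hdim, Module.finrank_mul_finrank]
  have hgen : Algebra.norm F (AdjoinSimple.gen F x) = (-1) ^ (minpoly F θ).natDegree * (minpoly F θ).eval a := by
    have h := Algebra.PowerBasis.norm_gen_eq_coeff_zero_minpoly (adjoin.powerBasis hint)
    rw [adjoin.powerBasis_gen, minpoly_gen, adjoin.powerBasis_dim, hdeg, hmin] at h
    rw [h, coeff_zero_eq_eval_zero, eval_comp]; simp
  have hnx : Algebra.norm F x = (-1) ^ (Module.finrank F E) *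
      ((minpoly F θ).eval a) ^ (Module.finrank F⟮x⟯ E) := by
    rw [Algebra.norm_eq_norm_adjoin, hgen, mul_pow, ← pow_mul, ← hfr]
  have h1 : algebraMap F E a - θ = algebraMap F E (-1) * x := by rw [hx]; simp
  rw [h1, map_mul, Algebra.norm_algebraMap, hnx, ← mul_assoc, ← mul_pow, eval_pow]
  rw [hfr, Nat.mul_div_cancel_left _ hpos]; simp

open Polynomial in
theorem card_roots_ext {F E : Type*} [Field F] [Fintype F] [Field E] [Fintype E] [Algebra F E]
    (P : F[X]) (hP : Irreducible P) (hm : P.Monic) :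
    (univ.filter fun θ : E => minpoly F θ = P).card =
      if P.natDegree ∣ Module.finrank F E then P.natDegree else 0 := by
  have hset : (univ.filter fun θ : E => minpoly F θ = P) = (P.aroots E).toFinset := by
    ext θ
    rw [mem_filter, Multiset.mem_toFinset, mem_aroots]
    constructor
    · rintro ⟨-, h⟩
      exact ⟨hP.ne_zero, by rw [← h]; exact minpoly.aeval F θ⟩
    · rintro ⟨-, h⟩
      exact ⟨mem_univ _, (minpoly.eq_of_irreducible_of_monic hP h hm).symm⟩
  split_ifs with hd
  · have : Fact (Irreducible P) := ⟨hP⟩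
    have hfr : Module.finrank F (AdjoinRoot P) = P.natDegree := by
      rw [(AdjoinRoot.powerBasis hP.ne_zero).finrank, AdjoinRoot.powerBasis_dim]
    obtain ⟨f⟩ := FiniteField.nonempty_algHom_of_finrank_dvd (F := F) (K := AdjoinRoot P) (L := E)
      (by rw [hfr]; exact hd)
    have hroot : aeval (f (AdjoinRoot.root P)) P = 0 := by
      rw [aeval_algHom_apply, AdjoinRoot.aeval_eq, AdjoinRoot.mk_self, map_zero]
    have hmin := minpoly.eq_of_irreducible_of_monic hP hroot hm
    have hsplit : (P.map (algebraMap F E)).Splits := by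
      rw [hmin]; exact Normal.splits inferInstance _
    have hsep : P.Separable := PerfectField.separable_of_irreducible hP
    rw [hset, Multiset.toFinset_card_of_nodup (nodup_roots hsep.map), ← hsplit.natDegree_eq_card_roots,
      natDegree_map]
  · rw [card_eq_zero, filter_eq_empty_iff]
    intro θ _ h
    apply hd
    rw [← h]
    exact minpoly.degree_dvd (IsIntegral.of_finite F θ)


open Polynomial UniqueFactorizationMonoid in
theorem deg_count {F : Type*} [Field F] [Fintype F] (E : ℕ → Type*) [∀ i, Field (E i)] [∀ i, Fintype (E i)]
    [∀ i, Algebra F (E i)] (hE : ∀ i, Module.finrank F (E i) = i + 1) (g : F[X]) (hg : g.Monic) :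
    ∑ i ∈ range g.natDegree, (univ.filter fun θ : E i =>
      (minpoly F θ) ^ ((i+1) / (minpoly F θ).natDegree) ∣ g).card = g.natDegree := by
  have hg0 : g ≠ 0 := hg.ne_zero
  set NF := (normalizedFactors g).toFinset with hNF
  have hirr : ∀ P ∈ NF, Irreducible P := fun P hP => irreducible_of_normalized_factor P (Multiset.mem_toFinset.1 hP)
  have hnorm : ∀ P ∈ NF, normalize P = P := fun P hP => normalize_normalized_factor P (Multiset.mem_toFinset.1 hP)
  have hmon : ∀ P ∈ NF, P.Monic := by
    intro P hP
    rw [← hnorm P hP]; exact monic_normalize (hirr P hP).ne_zero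
  have hpow : ∀ P ∈ NF, ∀ k, P ^ k ∣ g ↔ k ≤ (normalizedFactors g).count P := by
    intro P hP k
    rw [pow_dvd_iff_le_emultiplicity, emultiplicity_eq_count_normalizedFactors (hirr P hP) hg0, hnorm P hP]
    norm_cast
  have hfib : ∀ i, (univ.filter fun θ : E i =>
      (minpoly F θ) ^ ((i+1) / (minpoly F θ).natDegree) ∣ g).card =
      ∑ P ∈ NF, if P.natDegree ∣ i + 1 ∧ P ^ ((i+1)/P.natDegree) ∣ g then P.natDegree else 0 := by
    intro i
    rw [card_eq_sum_card_fiberwise (f := fun θ : E i => minpoly F θ) (t := NF)]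
    · apply sum_congr rfl
      intro P hP
      rw [filter_filter]
      by_cases h : P ^ ((i+1)/P.natDegree) ∣ g
      · have e : (univ.filter fun θ : E i => minpoly F θ ^ ((i+1) / (minpoly F θ).natDegree) ∣ g ∧ minpoly F θ = P)
            = univ.filter fun θ : E i => minpoly F θ = P := by
          apply filter_congr
          intro θ _
          constructor
          · exact fun h => h.2
          · intro h'; rw [h']; exact ⟨h, rfl⟩
        rw [e, card_roots_ext P (hirr P hP) (hmon P hP), hE]
        simp [h]
      · rw [if_neg (fun h' => h h'.2), card_eq_zero, filter_eq_empty_iff]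
        rintro θ _ ⟨h1, h2⟩
        rw [h2] at h1; exact h h1
    · intro θ hθ
      have hθ' := (mem_filter.1 hθ).2
      have hint : IsIntegral F θ := IsIntegral.of_finite F θ
      have hd : (minpoly F θ).natDegree ∣ i + 1 := by rw [← hE i]; exact minpoly.degree_dvd hint
      have hk : (i+1) / (minpoly F θ).natDegree ≠ 0 := by
        have := Nat.div_pos (Nat.le_of_dvd (by omega) hd) (minpoly.natDegree_pos hint)
        omega
      have hdv : minpoly F θ ∣ g := (dvd_pow_self _ hk).trans hθ'
      have h1 := minpoly.irreducible hint
      obtain ⟨P, hP, hass⟩ := exists_mem_normalizedFactors_of_dvd hg0 h1 hdv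
      have hP' : P ∈ NF := Multiset.mem_toFinset.2 hP
      have : minpoly F θ = P := eq_of_monic_of_associated (minpoly.monic hint) (hmon P hP') hass
      simp only [mem_coe]
      rw [this]; exact hP'
  rw [sum_congr rfl fun i _ => hfib i, sum_comm]
  have hP : ∀ P ∈ NF, (∑ i ∈ range g.natDegree,
      if P.natDegree ∣ i + 1 ∧ P ^ ((i+1)/P.natDegree) ∣ g then P.natDegree else 0)
      = (normalizedFactors g).count P * P.natDegree := by
    intro P hP
    have hdpos : 0 < P.natDegree := (hirr P hP).natDegree_pos
    rw [← sum_filter, sum_const, smul_eq_mul]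
    congr 1
    conv_rhs => rw [← card_range ((normalizedFactors g).count P)]
    symm
    apply card_bij (fun k _ => (k+1) * P.natDegree - 1)
    · intro k hk
      have hk' : k + 1 ≤ (normalizedFactors g).count P := by simpa using hk
      have hdv := (hpow P hP (k+1)).2 hk'
      have hle := natDegree_le_of_dvd hdv hg0
      rw [natDegree_pow] at hle
      have hp : 0 < (k+1) * P.natDegree := by positivity
      have e : (k+1) * P.natDegree - 1 + 1 = (k+1) * P.natDegree := by omega
      rw [mem_filter, mem_range, e]
      refine ⟨by omega, dvd_mul_left _ _, ?_⟩
      rwa [Nat.mul_div_cancel _ hdpos]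
    · intro k _ l _ h
      have hp : 0 < (k+1) * P.natDegree := by positivity
      have hp' : 0 < (l+1) * P.natDegree := by positivity
      have : (k+1) * P.natDegree = (l+1) * P.natDegree := by omega
      have := Nat.eq_of_mul_eq_mul_right hdpos this
      omega
    · intro i hi
      rw [mem_filter, mem_range] at hi
      obtain ⟨h1, ⟨k, hk⟩, h3⟩ := hi
      rw [hk, Nat.mul_div_cancel_left _ hdpos, hpow P hP] at h3
      have hk0 : k ≠ 0 := by rintro rfl; simp at hk
      refine ⟨k - 1, by rw [mem_range]; omega, ?_⟩
      have : k - 1 + 1 = k := by omega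
      rw [this, mul_comm, ← hk]; omega
  rw [sum_congr rfl hP]
  have hprod : (normalizedFactors g).prod = g := by
    rw [prod_normalizedFactors_eq hg0]; exact hg.normalize_eq_self
  conv_rhs => rw [← hprod]
  rw [natDegree_multiset_prod, sum_multiset_map_count]
  · simp only [smul_eq_mul]; rfl
  · exact zero_notMem_normalizedFactors g


open Polynomial in
theorem mon_finite (F : Type*) [Field F] [Fintype F] (n : ℕ) :
    {g : F[X] | g.Monic ∧ g.natDegree = n}.Finite := by
  apply Set.Finite.of_finite_image (f := fun g : F[X] => (fun i : Fin (n+1) => g.coeff i))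
  · exact Set.toFinite _
  · rintro g ⟨_, hg⟩ h ⟨_, hh⟩ e
    ext i
    by_cases hi : i < n + 1
    · exact congrFun e ⟨i, hi⟩
    · rw [coeff_eq_zero_of_natDegree_lt (by omega), coeff_eq_zero_of_natDegree_lt (by omega)]

open Polynomial in
noncomputable def MonF (F : Type*) [Field F] [Fintype F] (n : ℕ) : Finset F[X] := (mon_finite F n).toFinset

open Polynomial in
theorem mem_MonF {F : Type*} [Field F] [Fintype F] {n : ℕ} {g : F[X]} :
    g ∈ MonF F n ↔ g.Monic ∧ g.natDegree = n := by
  simp [MonF]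

open Polynomial in
theorem rec_formula {F : Type*} [Field F] [Fintype F] (E : ℕ → Type*) [∀ i, Field (E i)] [∀ i, Fintype (E i)]
    [∀ i, Algebra F (E i)] (hE : ∀ i, Module.finrank F (E i) = i + 1)
    (Φ : F[X] → ℂ) (hΦ : ∀ g h, Φ (g * h) = Φ g * Φ h) (n : ℕ) :
    ((n:ℂ)+1) * ∑ g ∈ MonF F (n+1), Φ g =
      ∑ i ∈ range (n+1), (∑ θ : E i, Φ ((minpoly F θ) ^ ((i+1) / (minpoly F θ).natDegree))) *
        ∑ g ∈ MonF F (n - i), Φ g := by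
  have h1 : ((n:ℂ)+1) * ∑ g ∈ MonF F (n+1), Φ g = ∑ g ∈ MonF F (n+1), ∑ i ∈ range (n+1),
      ∑ θ : E i, if (minpoly F θ) ^ ((i+1) / (minpoly F θ).natDegree) ∣ g then Φ g else 0 := by
    rw [mul_sum]
    apply sum_congr rfl
    intro g hg
    obtain ⟨hm, hd⟩ := mem_MonF.1 hg
    have := deg_count E hE g hm
    rw [hd] at this
    have h2 : ((n:ℂ)+1) = ∑ i ∈ range (n+1), ((univ.filter fun θ : E i =>
      (minpoly F θ) ^ ((i+1) / (minpoly F θ).natDegree) ∣ g).card : ℂ) := by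
      rw [← Nat.cast_sum, this]; push_cast; rfl
    rw [h2, sum_mul]
    apply sum_congr rfl
    intro i _
    rw [← sum_filter, sum_const, nsmul_eq_mul]
  rw [h1, sum_comm]
  apply sum_congr rfl
  intro i hi
  rw [sum_comm, sum_mul]
  apply sum_congr rfl
  intro θ _
  set Q := (minpoly F θ) ^ ((i+1) / (minpoly F θ).natDegree) with hQ
  have hint : IsIntegral F θ := IsIntegral.of_finite F θ
  have hQm : Q.Monic := (minpoly.monic hint).pow _
  have hd : (minpoly F θ).natDegree ∣ i + 1 := by rw [← hE i]; exact minpoly.degree_dvd hint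
  have hQd : Q.natDegree = i + 1 := by
    rw [hQ, natDegree_pow, Nat.div_mul_cancel hd]
  have hi' : i ≤ n := by simpa [Nat.lt_succ_iff] using hi
  rw [← sum_filter, mul_sum]
  symm
  apply sum_bij (fun h _ => Q * h)
  · intro h hh
    obtain ⟨h1, h2⟩ := mem_MonF.1 hh
    rw [mem_filter, mem_MonF]
    refine ⟨⟨hQm.mul h1, ?_⟩, dvd_mul_right _ _⟩
    rw [hQm.natDegree_mul h1, hQd, h2]; omega
  · intro a _ b _ h
    exact mul_left_cancel₀ hQm.ne_zero h
  · intro g hg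
    rw [mem_filter, mem_MonF] at hg
    obtain ⟨⟨h1, h2⟩, ⟨h, rfl⟩⟩ := hg
    have hh := hQm.of_mul_monic_left h1
    refine ⟨h, ?_, rfl⟩
    rw [mem_MonF]
    refine ⟨hh, ?_⟩
    rw [hQm.natDegree_mul hh, hQd] at h2; omega
  · intro h _
    rw [hΦ]

open Polynomial in
theorem c_vanish {F : Type*} [Field F] [Fintype F] (a1 a2 a3 a4 : F) (h12 : a1≠a2) (h13 : a1≠a3) (h14 : a1 ≠ a4)
    (χ : MulChar F ℂ) (hχ : χ ≠ 1) (Y : F → F → F → ℂ) (n : ℕ) (hn : 4 ≤ n) :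
    ∑ g ∈ MonF F n, χ (g.eval a1) * Y (g.eval a2) (g.eval a3) (g.eval a4) = 0 := by
  obtain ⟨ζ, hζ⟩ : ∃ ζ : Fˣ, χ ζ ≠ 1 := by
    by_contra! h
    apply hχ; ext u; rw [h u, MulChar.one_apply_coe]
  have s2 := sub_ne_zero.2 h12
  have s3 := sub_ne_zero.2 h13
  have s4 := sub_ne_zero.2 h14
  set ℓ : F[X] := C (((a1-a2)*(a1-a3)*(a1-a4))⁻¹) * ((X - C a2) * (X - C a3) * (X - C a4)) with hℓ
  have e1 : ℓ.eval a1 = 1 := by simp [hℓ]; field_simp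
  have e2 : ℓ.eval a2 = 0 := by simp [hℓ]
  have e3 : ℓ.eval a3 = 0 := by simp [hℓ]
  have e4 : ℓ.eval a4 = 0 := by simp [hℓ]
  have hdeg : ℓ.natDegree ≤ 3 := by
    rw [hℓ]
    refine (natDegree_C_mul_le _ _).trans ?_
    compute_degree
  let T : F[X] → F[X] := fun g => g + C (g.eval a1 * (ζ - 1)) * ℓ
  have hdT : ∀ g : F[X], (C (g.eval a1 * (ζ - 1)) * ℓ).natDegree ≤ 3 := fun g =>
    (natDegree_C_mul_le _ _).trans hdeg
  have hT : ∀ g ∈ MonF F n, T g ∈ MonF F n := by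
    intro g hg
    obtain ⟨h1, h2⟩ := mem_MonF.1 hg
    have hlt : (C (g.eval a1 * (ζ - 1)) * ℓ).natDegree < g.natDegree := by have := hdT g; omega
    rw [mem_MonF]
    refine ⟨h1.add_of_left (degree_lt_degree hlt), ?_⟩
    rw [natDegree_add_eq_left_of_natDegree_lt hlt, h2]
  have hT1 : ∀ g, (T g).eval a1 = ζ * g.eval a1 := by
    intro g; simp [T, e1]; ring
  have hinj : Set.InjOn T (MonF F n : Set F[X]) := by
    intro g _ h _ e
    have h1 : (T g).eval a1 = (T h).eval a1 := by rw [e]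
    rw [hT1, hT1] at h1
    have h2 := mul_left_cancel₀ ζ.ne_zero h1
    simp only [T, h2] at e
    exact add_right_cancel e
  have hsurj : Set.SurjOn T (MonF F n : Set F[X]) (MonF F n : Set F[X]) :=
    surjOn_of_injOn_of_card_le T hT hinj le_rfl
  set Sg := ∑ g ∈ MonF F n, χ (g.eval a1) * Y (g.eval a2) (g.eval a3) (g.eval a4) with hSg
  have key : χ ζ * Sg = Sg := by
    rw [hSg, mul_sum]
    apply sum_nbij T hT hinj hsurj
    intro g _
    rw [hT1, map_mul]
    simp [T, e2, e3, e4, mul_assoc]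
  have : (χ ζ - 1) * Sg = 0 := by linear_combination key
  exact (mul_eq_zero.1 this).resolve_left (sub_ne_zero.2 hζ)

open Polynomial in
theorem weil_four {F : Type*} [Field F] [Fintype F] 
    (a1 a2 a3 a4 : F) (h12 : a1≠a2) (h13 : a1≠a3) (h14 : a1 ≠ a4) (h23 : a2≠a3) (h34 : a3≠a4)
    (χ ψ : MulChar F ℂ) (hχ : χ ≠ 1) :
    ‖∑ s : F, χ (s + a1) * χ⁻¹ (s + a2) * (ψ (s + a3) * ψ⁻¹ (s + a4))‖ ≤ 3 * Real.sqrt (Fintype.card F) := by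
  obtain ⟨p, hpc, f, hp, hf⟩ := FiniteField.card' F
  have : Fact p.Prime := ⟨hp⟩
  let E : ℕ → Type := fun i => FiniteField.Extension F p (i+1)
  let _ : ∀ i, Field (E i) := fun i => inferInstanceAs (Field (FiniteField.Extension F p (i+1)))
  let _ : ∀ i, Fintype (E i) := fun i => Fintype.ofFinite (FiniteField.Extension F p (i+1))
  let _ : ∀ i, Algebra F (E i) := fun i => inferInstanceAs (Algebra F (FiniteField.Extension F p (i+1)))
  have hE : ∀ i, Module.finrank F (E i) = i + 1 := fun i => FiniteField.finrank_extension F p (i+1)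
  let Φ : F[X] → ℂ := fun g => χ (g.eval a1) * (χ⁻¹ (g.eval a2) * (ψ (g.eval a3) * ψ⁻¹ (g.eval a4)))
  have hΦ : ∀ g h, Φ (g * h) = Φ g * Φ h := by
    intro g h; simp only [Φ, eval_mul, map_mul]; ring
  have main := ana_main (fun n => ∑ g ∈ MonF F n, Φ g)
    (fun i => ∑ θ : E i, Φ ((minpoly F θ) ^ ((i+1) / (minpoly F θ).natDegree)))
    (2 * ((Fintype.card F) * ((3*(Fintype.card F)+8+(Fintype.card F)*(2*(Fintype.card F)+4))*(Fintype.card F))) + 4)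
    (Real.sqrt (Fintype.card F)) (Real.sqrt_pos.2 (by exact_mod_cast Fintype.card_pos)) ?_ ?_
    (fun n => rec_formula E hE Φ hΦ n) ?_
  · refine le_trans (le_of_eq ?_) main
    congr 1
    apply sum_bij (fun s _ => X + C s)
    · intro s _
      rw [mem_MonF]; exact ⟨monic_X_add_C s, natDegree_X_add_C s⟩
    · intro a _ b _ h
      simpa using h
    · intro g hg
      obtain ⟨h1, h2⟩ := mem_MonF.1 hg
      refine ⟨g.coeff 0, mem_univ _, ?_⟩
      rw [eq_comm]
      exact h1.eq_X_add_C h2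
    · intro s _
      simp only [Φ, eval_add, eval_X, eval_C]
      rw [add_comm s, add_comm s, add_comm s, add_comm s, mul_assoc]
  · have : MonF F 0 = {1} := by
      ext g; rw [mem_MonF, mem_singleton]
      constructor
      · rintro ⟨h1, h2⟩; exact h1.natDegree_eq_zero.1 h2
      · rintro rfl; exact ⟨monic_one, natDegree_one⟩
    simp [this, Φ]
  · intro n hn
    exact c_vanish a1 a2 a3 a4 h12 h13 h14 χ hχ (fun x y z => χ⁻¹ x * (ψ y * ψ⁻¹ z)) n hn
  · intro i
    have hcard : Fintype.card (E i) = Fintype.card F ^ (i+1) := by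
      rw [Module.card_eq_pow_finrank (K := F), hE]
    have := char_sum_ext (E := E i) (i+1) (by omega) hcard a1 a2 a3 a4 h12 h13 h23 h34 χ ψ hχ
    refine le_trans (le_of_eq ?_) this
    congr 1
    apply sum_congr rfl
    intro θ _
    simp only [Φ, norm_pow_minpoly, hE]
    ring


theorem second_moment {F : Type*} [Fintype F] (A : F → F) (K : F → F → ℂ) (hK : ∀ s y, ‖K s y‖ ≤ 1)
    (q : ℝ) (hq : q = Fintype.card F) (hq1 : 1 ≤ q)
    (hG : ∀ y y', y ≠ y' → y ≠ A y' → y' ≠ A y →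
      ‖∑ s, K s y * starRingEnd ℂ (K s y')‖ ≤ 7 * Real.sqrt q)
    (μ : F → ℝ) (hμ0 : ∀ x, 0 ≤ μ x) (hμ1 : ∑ x, μ x = 1) (δ : ℝ) (hμ : ∀ x, μ x ≤ δ) :
    ∑ y, ‖∑ s, (μ s : ℂ) * K s y‖ ^ 2 ≤ δ * (16 * (q * Real.sqrt q)) := by
  set G : F → F → ℂ := fun y y' => ∑ s, K s y * starRingEnd ℂ (K s y') with hGdef
  have hδ : 0 ≤ δ := by
    by_contra! h
    have : ∑ x, μ x ≤ ∑ x : F, (0:ℝ) := sum_le_sum fun x _ => (hμ x).trans h.le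
    rw [hμ1] at this; simp at this; linarith
  have hs0 : Real.sqrt q ^ 2 = q := Real.sq_sqrt (by linarith)
  have htriv : ∀ y y', ‖G y y'‖ ≤ q := by
    intro y y'
    rw [hq]
    calc _ ≤ ∑ s : F, (1:ℝ) := by
          apply norm_sum_le_of_le
          intro s _
          rw [norm_mul, RCLike.norm_conj]
          exact mul_le_one₀ (hK _ _) (norm_nonneg _) (hK _ _)
      _ = _ := by simp
  have hFro : ∑ y, ∑ y', ‖G y y'‖^2 ≤ 52 * q^3 := by
    have hp : ∀ y y', ‖G y y'‖^2 ≤ 49 * q + ((if y = y' then q^2 else 0) + (if y = A y' then q^2 else 0)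
        + (if y' = A y then q^2 else 0)) := by
      intro y y'
      have hsq : ‖G y y'‖^2 ≤ q^2 := by
        have := htriv y y'; gcongr
      by_cases h1 : y = y'
      · rw [if_pos h1]; split_ifs <;> nlinarith
      by_cases h2 : y = A y'
      · rw [if_pos h2]; split_ifs <;> nlinarith
      by_cases h3 : y' = A y
      · rw [if_pos h3]; split_ifs <;> nlinarith
      rw [if_neg h1, if_neg h2, if_neg h3]
      have := hG y y' h1 h2 h3
      calc _ ≤ (7 * Real.sqrt q)^2 := by gcongr
        _ = 49 * q := by rw [mul_pow, hs0]; norm_num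
        _ ≤ _ := by simp
    calc _ ≤ ∑ y, ∑ y', (49 * q + ((if y = y' then q^2 else 0) + (if y = A y' then q^2 else 0)
        + (if y' = A y then q^2 else 0))) := sum_le_sum fun y _ => sum_le_sum fun y' _ => hp y y'
      _ = 52 * q^3 := by
        simp only [sum_add_distrib]
        rw [sum_comm (f := fun y y' => if y = A y' then q^2 else 0)]
        simp [← hq]
        ring
  set Ev : F → ℂ := fun y => ∑ s, (μ s : ℂ) * K s y with hEv
  set x := ∑ y, ‖Ev y‖^2 with hx
  have hx0 : 0 ≤ x := sum_nonneg fun _ _ => by positivity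
  set w : F → ℂ := fun y => starRingEnd ℂ (Ev y) with hw
  set V : F → ℂ := fun s => ∑ y, w y * K s y with hV
  have hxV : (x : ℂ) = ∑ s, (μ s : ℂ) * V s := by
    simp only [hV, mul_sum]
    rw [sum_comm, hx]
    push_cast
    apply sum_congr rfl
    intro y _
    rw [← Complex.mul_conj', mul_comm]
    change w y * Ev y = _
    simp only [hEv, mul_sum]
    apply sum_congr rfl
    intro s _; ring
  have h1 : x ≤ ∑ s, μ s * ‖V s‖ := by
    have : ‖(x:ℂ)‖ ≤ ∑ s, μ s * ‖V s‖ := by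
      rw [hxV]
      apply norm_sum_le_of_le
      intro s _
      rw [norm_mul, Complex.norm_real, Real.norm_of_nonneg (hμ0 s)]
    rwa [Complex.norm_real, Real.norm_of_nonneg hx0] at this
  have h2 : x^2 ≤ (∑ s, μ s^2) * ∑ s, ‖V s‖^2 := by
    calc x^2 ≤ (∑ s, μ s * ‖V s‖)^2 := by gcongr
      _ ≤ _ := sum_mul_sq_le_sq_mul_sq _ _ _
  have hμ2 : ∑ s, μ s^2 ≤ δ := by
    calc _ ≤ ∑ s, δ * μ s := sum_le_sum fun s _ => by nlinarith [hμ s, hμ0 s]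
      _ = δ := by rw [← mul_sum, hμ1, mul_one]
  have hVG : ((∑ s, ‖V s‖^2 : ℝ) : ℂ) = ∑ p : F × F, (w p.1 * starRingEnd ℂ (w p.2)) * G p.1 p.2 := by
    push_cast
    have e : ∀ s, ((‖V s‖ : ℝ) : ℂ)^2 = ∑ y, ∑ y', (w y * K s y) * starRingEnd ℂ (w y' * K s y') := by
      intro s
      rw [← Complex.mul_conj', hV]
      simp only [map_sum]
      rw [sum_mul_sum]
    simp only [e, hGdef, mul_sum, Fintype.sum_prod_type]
    rw [sum_comm]
    apply sum_congr rfl; intro y _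
    rw [sum_comm]
    apply sum_congr rfl; intro y' _
    apply sum_congr rfl; intro s _
    rw [map_mul]; ring
  have h3 : ∑ s, ‖V s‖^2 ≤ ∑ p : F × F, (‖w p.1‖ * ‖w p.2‖) * ‖G p.1 p.2‖ := by
    have : ‖((∑ s, ‖V s‖^2 : ℝ) : ℂ)‖ ≤ ∑ p : F × F, (‖w p.1‖ * ‖w p.2‖) * ‖G p.1 p.2‖ := by
      rw [hVG]
      apply norm_sum_le_of_le
      intro p _
      rw [norm_mul, norm_mul, RCLike.norm_conj (w p.2)]
    rwa [Complex.norm_real, Real.norm_of_nonneg (sum_nonneg fun _ _ => by positivity)] at this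
  have h4 : (∑ s, ‖V s‖^2)^2 ≤ x^2 * (52 * q^3) := by
    calc _ ≤ (∑ p : F × F, (‖w p.1‖ * ‖w p.2‖) * ‖G p.1 p.2‖)^2 := by
          have : 0 ≤ ∑ s, ‖V s‖^2 := sum_nonneg fun _ _ => by positivity
          gcongr
      _ ≤ (∑ p : F × F, (‖w p.1‖ * ‖w p.2‖)^2) * ∑ p : F × F, ‖G p.1 p.2‖^2 := sum_mul_sq_le_sq_mul_sq _ _ _
      _ = x^2 * ∑ y, ∑ y', ‖G y y'‖^2 := by
          rw [Fintype.sum_prod_type, Fintype.sum_prod_type]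
          congr 1
          simp only [mul_pow, hw, RCLike.norm_conj]
          rw [← sum_mul_sum, ← hx]; ring
      _ ≤ _ := by gcongr
  have hsq : (16 * (q * Real.sqrt q))^2 = 256 * q^3 := by
    rw [mul_pow, mul_pow, hs0]; ring
  have h5 : ∑ s, ‖V s‖^2 ≤ x * (16 * (q * Real.sqrt q)) := by
    apply (sq_le_sq₀ (sum_nonneg fun _ _ => by positivity) (by positivity)).1
    rw [mul_pow, hsq]
    refine h4.trans ?_
    gcongr
    norm_num
  have h6 : x^2 ≤ δ * (x * (16 * (q * Real.sqrt q))) := by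
    refine h2.trans ?_
    apply mul_le_mul hμ2 h5 (sum_nonneg fun _ _ => by positivity) hδ
  rcases hx0.eq_or_lt with h | h
  · rw [← h]; positivity
  · nlinarith


theorem two_sum {F : Type*} [Field F] [Fintype F] (χ : MulChar F ℂ) (hχ : χ ≠ 1) (a b : F) (hab : a ≠ b) :
    ‖∑ s : F, χ (s + a) * χ⁻¹ (s + b)‖ ≤ 1 := by
  have hd : a - b ≠ 0 := sub_ne_zero.2 hab
  have hn : ∀ χ : MulChar F ℂ, ∀ x : F, x ≠ 0 → ‖χ x‖ = 1 := by
    intro χ x hx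
    have : (χ x) ^ (Fintype.card F - 1) = 1 := by
      rw [← map_pow, FiniteField.pow_card_sub_one_eq_one _ hx, map_one]
    have h1 : 1 < Fintype.card F := Fintype.one_lt_card
    exact Complex.norm_eq_one_of_pow_eq_one this (by omega)
  have h : ∑ s : F, χ (s + a) * χ⁻¹ (s + b) = (χ (a-b) * χ⁻¹ (-(a-b))) * jacobiSum χ χ⁻¹ := by
    rw [jacobiSum, mul_sum]
    symm
    apply sum_nbij' (fun x => (a-b)*x - a) (fun s => (s + a)/(a-b))
    · simp
    · simp
    · intro x _; field_simp; ring
    · intro s _; field_simp; ring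
    · intro x _
      have e1 : (a-b)*x - a + a = (a-b)*x := by ring
      have e2 : (a-b)*x - a + b = (-(a-b))*(1-x) := by ring
      rw [e1, e2, map_mul, map_mul]; ring
  rw [h, jacobiSum_nontrivial_inv hχ, norm_mul, norm_mul, norm_neg, hn _ _ hd, hn _ _ (neg_ne_zero.2 hd),
    hn _ _ (neg_ne_zero.2 one_ne_zero)]
  norm_num

theorem mk_char {F : Type*} [Field F] [Fintype F]
    (M : ℕ) [NeZero M] (hM : M ∣ Fintype.card F - 1)
    (g : Fˣ) (hg : ∀ z : Fˣ, z ∈ Subgroup.zpowers g)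
    (dlog : Fˣ → ℕ) (hdlog : ∀ z, g ^ dlog z = z)
    (nmExt : F → F → ZMod M)
    (hnm : ∀ x y : F, ∀ hxy : x + y ≠ 0,
      nmExt x y = ((dlog (Units.mk0 (x + y) hxy) : ℕ) : ZMod M)) (φ : AddChar (ZMod M) ℂ) :
    ∃ χ : MulChar F ℂ, (∀ x y, x + y ≠ 0 → φ (nmExt x y) = χ (x + y)) ∧ (φ ≠ 0 → χ ≠ 1) := by
  have ho : orderOf g = Fintype.card F - 1 := by
    rw [orderOf_eq_card_of_forall_mem_zpowers hg, Nat.card_units, Nat.card_eq_fintype_card]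
  have hcong : ∀ m n : ℕ, g ^ m = g ^ n → (m : ZMod M) = n := by
    intro m n h
    rw [pow_eq_pow_iff_modEq, ho] at h
    exact (ZMod.natCast_eq_natCast_iff _ _ _).2 (h.of_dvd hM)
  let f : Fˣ →* ℂ :=
    { toFun := fun z => φ (dlog z : ZMod M)
      map_one' := by
        have := hcong (dlog 1) 0 (by rw [hdlog, pow_zero])
        rw [this]; simp
      map_mul' := by
        intro z w
        have := hcong (dlog (z*w)) (dlog z + dlog w) (by rw [hdlog, pow_add, hdlog, hdlog])
        rw [this]; push_cast; rw [AddChar.map_add_eq_mul] }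
  have hf : ∀ z, f z = φ (dlog z : ZMod M) := fun z => rfl
  refine ⟨MulChar.ofUnitHom f.toHomUnits, ?_, ?_⟩
  · intro x y hxy
    rw [hnm x y hxy, ← hf]
    have : x + y = ((Units.mk0 (x+y) hxy : Fˣ) : F) := rfl
    conv_rhs => rw [this, MulChar.ofUnitHom_coe]
    rfl
  · intro hφ hχ
    apply hφ
    ext a
    have h1 : (MulChar.ofUnitHom f.toHomUnits : MulChar F ℂ) ((g ^ a.val : Fˣ) : F) = 1 := by
      rw [hχ, MulChar.one_apply_coe]
    rw [MulChar.ofUnitHom_coe] at h1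
    have h2 : f (g ^ a.val) = 1 := h1
    rw [hf, hcong _ a.val (hdlog _), ZMod.natCast_zmod_val] at h2
    rw [h2]; simp

theorem G_bound {F : Type*} [Field F] [Fintype F] (M : ℕ) [NeZero M] (nmExt : F → F → ZMod M)
    (A : F → F) (hA : ∀ y, A y ≠ y) (φ φ' : AddChar (ZMod M) ℂ) (χ ψ : MulChar F ℂ) (hχ : χ ≠ 1)
    (h1 : ∀ x y, x + y ≠ 0 → φ (nmExt x y) = χ (x + y)) (h2 : ∀ x y, x + y ≠ 0 → φ' (nmExt x y) = ψ (x + y))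
    (y y' : F) (hy : y ≠ y') (hy1 : y ≠ A y') (hy2 : y' ≠ A y) :
    ‖∑ s, (φ (nmExt s y) * φ' (nmExt s (A y))) * starRingEnd ℂ (φ (nmExt s y') * φ' (nmExt s (A y')))‖
      ≤ 7 * Real.sqrt (Fintype.card F) := by
  have hs1 : 1 ≤ Real.sqrt (Fintype.card F) := by
    rw [Real.one_le_sqrt]; exact_mod_cast Fintype.card_pos
  have hn : ∀ φ : AddChar (ZMod M) ℂ, ∀ x, ‖φ x‖ = 1 := fun φ x => AddChar.norm_apply φ x
  have hconj : ∀ φ : AddChar (ZMod M) ℂ, ∀ χ : MulChar F ℂ, ∀ x y,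
      φ (nmExt x y) = χ (x + y) → starRingEnd ℂ (φ (nmExt x y)) = χ⁻¹ (x + y) := by
    intro φ χ x y h
    rw [MulChar.inv_apply_eq_inv, ← h, Ring.inverse_eq_inv]
    rw [Complex.inv_def, Complex.normSq_eq_norm_sq, hn]; simp
  have diff : ∀ (t u : F → ℂ) (B : Finset F), (∀ s, ‖t s‖ ≤ 1) → (∀ s ∉ B, t s = u s) → (∀ s ∈ B, u s = 0) →
      ‖∑ s, t s‖ ≤ ‖∑ s, u s‖ + B.card := by
    intro t u B ht h h'
    have e : ∑ s, t s = ∑ s, u s + ∑ s ∈ B, t s := by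
      rw [← sub_eq_iff_eq_add', ← sum_sub_distrib]
      symm
      rw [sum_congr rfl (g := fun s => t s - u s)]
      · apply sum_subset (subset_univ B)
        intro s _ hs
        rw [h s hs, sub_self]
      · intro s hs; rw [h' s hs, sub_zero]
    rw [e]
    refine (norm_add_le _ _).trans ?_
    gcongr
    calc _ ≤ ∑ s ∈ B, (1:ℝ) := norm_sum_le_of_le _ fun s _ => ht s
      _ = _ := by simp
  have ht : ∀ s, ‖(φ (nmExt s y) * φ' (nmExt s (A y))) * starRingEnd ℂ (φ (nmExt s y') * φ' (nmExt s (A y')))‖ ≤ 1 := by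
    intro s
    rw [norm_mul, RCLike.norm_conj, norm_mul, norm_mul, hn, hn, hn, hn]; norm_num
  by_cases hz : A y = A y'
  · have := diff _ (fun s => χ (s + y) * χ⁻¹ (s + y')) {-y, -y'} ht ?_ ?_
    · have h3 := two_sum χ hχ y y' hy
      have h4 : (({-y, -y'} : Finset F).card : ℝ) ≤ 2 := by exact_mod_cast card_le_two
      linarith
    · intro s hs
      simp only [mem_insert, mem_singleton, not_or] at hs
      have e1 : s + y ≠ 0 := fun h => hs.1 (eq_neg_of_add_eq_zero_left h)
      have e2 : s + y' ≠ 0 := fun h => hs.2 (eq_neg_of_add_eq_zero_left h)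
      rw [map_mul, hconj φ χ s y' (h1 _ _ e2), h1 _ _ e1, hz]
      have : φ' (nmExt s (A y')) * starRingEnd ℂ (φ' (nmExt s (A y'))) = 1 := by
        rw [Complex.mul_conj', hn]; simp
      linear_combination (χ (s + y) * χ⁻¹ (s + y')) * this
    · intro s hs
      simp only [mem_insert, mem_singleton] at hs
      rcases hs with rfl | rfl
      · simp [MulChar.map_zero]
      · simp [MulChar.map_zero]
  · have := diff _ (fun s => χ (s + y) * χ⁻¹ (s + y') * (ψ (s + A y) * ψ⁻¹ (s + A y'))) {-y, -y', -A y, -A y'} ht ?_ ?_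
    · have h3 := weil_four y y' (A y) (A y') hy (hA y).symm hy1 hy2 hz χ ψ hχ
      have h4 : (({-y, -y', -A y, -A y'} : Finset F).card : ℝ) ≤ 4 := by exact_mod_cast card_le_four
      linarith
    · intro s hs
      simp only [mem_insert, mem_singleton, not_or] at hs
      have e1 : s + y ≠ 0 := fun h => hs.1 (eq_neg_of_add_eq_zero_left h)
      have e2 : s + y' ≠ 0 := fun h => hs.2.1 (eq_neg_of_add_eq_zero_left h)
      have e3 : s + A y ≠ 0 := fun h => hs.2.2.1 (eq_neg_of_add_eq_zero_left h)
      have e4 : s + A y' ≠ 0 := fun h => hs.2.2.2 (eq_neg_of_add_eq_zero_left h)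
      rw [map_mul, hconj φ χ s y' (h1 _ _ e2), hconj φ' ψ s (A y') (h2 _ _ e4), h1 _ _ e1, h2 _ _ e3]
      ring
    · intro s hs
      simp only [mem_insert, mem_singleton] at hs
      rcases hs with rfl | rfl | rfl | rfl <;> simp [MulChar.map_zero]


theorem parseval_real {G : Type*} [AddCommGroup G] [Fintype G] (D : G → ℝ) :
    ∑ Ψ : AddChar G ℂ, ‖∑ p, (D p : ℂ) * Ψ p‖ ^ 2 = Fintype.card G * ∑ p, D p ^ 2 := by
  have h : ((∑ Ψ : AddChar G ℂ, ‖∑ p, (D p : ℂ) * Ψ p‖ ^ 2 : ℝ) : ℂ) = ((Fintype.card G * ∑ p, D p ^ 2 : ℝ) : ℂ) := by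
    push_cast
    have e : ∀ Ψ : AddChar G ℂ, ((‖∑ p, (D p : ℂ) * Ψ p‖ : ℂ)) ^ 2 =
        ∑ p, ∑ r, (D p : ℂ) * D r * Ψ (p - r) := by
      intro Ψ
      rw [← Complex.mul_conj', map_sum, Finset.sum_mul_sum]
      refine Finset.sum_congr rfl fun p _ => Finset.sum_congr rfl fun r _ => ?_
      rw [map_mul, Complex.conj_ofReal, sub_eq_add_neg, AddChar.map_add_eq_mul, AddChar.map_neg_eq_conj]
      ring
    simp_rw [e]
    rw [Finset.sum_comm, Finset.mul_sum]
    refine Finset.sum_congr rfl fun p _ => ?_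
    rw [Finset.sum_comm]
    simp_rw [← Finset.mul_sum, AddChar.sum_apply_eq_ite, sub_eq_zero]
    rw [Finset.sum_eq_single p]
    · simp; ring
    · intro b _ hb
      rw [if_neg (Ne.symm hb)]; simp
    · simp
  exact_mod_cast h

theorem fourier_D {F : Type*} [Fintype F] (M : ℕ) [NeZero M] (n n' : F → ZMod M) (μ : F → ℝ)
    (D : ZMod M × ZMod M → ℝ)
    (hD : ∀ p, D p = (∑ x ∈ univ.filter (fun x => n x = p.1 ∧ n' x = p.2), μ x)
      - (∑ x ∈ univ.filter (fun x => n' x = p.2), μ x) / M) (φ φ' : AddChar (ZMod M) ℂ) :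
    ∑ p, (D p : ℂ) * (φ p.1 * φ' p.2) =
      if φ = 0 then 0 else ∑ s, (μ s : ℂ) * (φ (n s) * φ' (n' s)) := by
  have e : ∀ p, (D p : ℂ) * (φ p.1 * φ' p.2) = ∑ s, ((if n s = p.1 ∧ n' s = p.2 then (μ s : ℂ) * (φ p.1 * φ' p.2) else 0) -
      (if n' s = p.2 then (μ s : ℂ) * (φ p.1 * φ' p.2) / M else 0)) := by
    intro p
    rw [hD, Finset.sum_filter, Finset.sum_filter]
    push_cast
    rw [sub_mul, Finset.sum_mul, Finset.sum_div, Finset.sum_mul, ← Finset.sum_sub_distrib]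
    refine Finset.sum_congr rfl fun s _ => ?_
    split_ifs <;> simp <;> ring
  simp_rw [e]
  rw [Finset.sum_comm]
  have e2 : ∀ s, ∑ p : ZMod M × ZMod M, ((if n s = p.1 ∧ n' s = p.2 then (μ s : ℂ) * (φ p.1 * φ' p.2) else 0) -
      (if n' s = p.2 then (μ s : ℂ) * (φ p.1 * φ' p.2) / M else 0)) =
      (μ s : ℂ) * (φ (n s) * φ' (n' s)) - (μ s : ℂ) * φ' (n' s) / M * ∑ w, φ w := by
    intro s
    rw [Finset.sum_sub_distrib]
    congr 1
    · rw [Finset.sum_eq_single (n s, n' s)]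
      · simp
      · rintro ⟨a, b⟩ _ hb
        rw [if_neg]
        rintro ⟨rfl, rfl⟩
        exact hb rfl
      · simp
    · rw [Fintype.sum_prod_type, Finset.mul_sum]
      refine Finset.sum_congr rfl fun w _ => ?_
      simp only
      rw [Finset.sum_ite_eq]
      simp; ring
  simp_rw [e2]
  split_ifs with h
  · subst h
    have : (M : ℂ) ≠ 0 := by exact_mod_cast NeZero.ne M
    apply Finset.sum_eq_zero
    intro s _
    simp [ZMod.card]
  · rw [AddChar.sum_eq_zero_iff_ne_zero.2 h]; simp

theorem moment_D {F : Type*} [Field F] [Fintype F]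
    (M : ℕ) [NeZero M] (hM : M ∣ Fintype.card F - 1)
    (g : Fˣ) (hg : ∀ z : Fˣ, z ∈ Subgroup.zpowers g)
    (dlog : Fˣ → ℕ) (hdlog : ∀ z, g ^ dlog z = z)
    (nmExt : F → F → ZMod M)
    (hnm : ∀ x y : F, ∀ hxy : x + y ≠ 0,
      nmExt x y = ((dlog (Units.mk0 (x + y) hxy) : ℕ) : ZMod M))
    (δ : ℝ) (μ : F → ℝ) (hμ0 : ∀ x, 0 ≤ μ x) (hμ1 : ∑ x, μ x = 1)
    (hk : ∀ x, μ x ≤ δ) (hδ : 0 ≤ δ)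
    (A : F → F) (hA : ∀ y, A y ≠ y) (D : F → ZMod M × ZMod M → ℝ)
    (hD : ∀ y p, D y p = (∑ x ∈ univ.filter (fun x => nmExt x y = p.1 ∧ nmExt x (A y) = p.2), μ x)
      - (∑ x ∈ univ.filter (fun x => nmExt x (A y) = p.2), μ x) / M) :
    ∑ y, ∑ p, D y p ^ 2 ≤ δ * (16 * ((Fintype.card F : ℝ) * √(Fintype.card F : ℝ))) := by
  set B := δ * (16 * ((Fintype.card F : ℝ) * √(Fintype.card F : ℝ))) with hB
  have hB0 : 0 ≤ B := by positivity
  have key : ∀ Ψ : AddChar (ZMod M × ZMod M) ℂ, ∑ y, ‖∑ p, (D y p : ℂ) * Ψ p‖ ^ 2 ≤ B := by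
    intro Ψ
    let φ : AddChar (ZMod M) ℂ := Ψ.compAddMonoidHom (AddMonoidHom.inl _ _)
    let φ' : AddChar (ZMod M) ℂ := Ψ.compAddMonoidHom (AddMonoidHom.inr _ _)
    have hs : ∀ p, Ψ p = φ p.1 * φ' p.2 := by
      intro p
      change Ψ p = Ψ (p.1, 0) * Ψ (0, p.2)
      rw [← AddChar.map_add_eq_mul]; simp
    simp_rw [hs]
    have f := fun y => fourier_D M (fun x => nmExt x y) (fun x => nmExt x (A y)) μ (D y) (hD y) φ φ'
    simp_rw [f]
    by_cases h : φ = 0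
    · simp [h, hB0]
    · simp only [h, if_false]
      obtain ⟨χ, h1, h1'⟩ := mk_char M hM g hg dlog hdlog nmExt hnm φ
      obtain ⟨ψ, h2, -⟩ := mk_char M hM g hg dlog hdlog nmExt hnm φ'
      refine second_moment A (fun s y => φ (nmExt s y) * φ' (nmExt s (A y))) ?_ _ rfl ?_ ?_ μ hμ0 hμ1 δ hk
      · intro s y
        simp [AddChar.norm_apply]
      · exact_mod_cast Fintype.card_pos
      · intro y y' a b c
        exact G_bound M nmExt A hA φ φ' χ ψ (h1' h) h1 h2 y y' a b c
  have s := Finset.sum_le_sum (s := univ) (fun Ψ _ => key Ψ)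
  rw [Finset.sum_comm] at s
  simp_rw [parseval_real] at s
  rw [← Finset.mul_sum, Finset.sum_const, Finset.card_univ, AddChar.card_eq, nsmul_eq_mul] at s
  exact le_of_mul_le_mul_left s (by exact_mod_cast Fintype.card_pos)

theorem stmt_18 {F : Type*} [Field F] [Fintype F] [DecidableEq F]
    (M : ℕ) [NeZero M] (hM : M ∣ Fintype.card F - 1)
    (g : Fˣ) (hg : ∀ z : Fˣ, z ∈ Subgroup.zpowers g)
    (dlog : Fˣ → ℕ) (hdlog : ∀ z, g ^ dlog z = z)
    (nmExt : F → F → ZMod M)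
    (hnm : ∀ x y : F, ∀ hxy : x + y ≠ 0,
      nmExt x y = ((dlog (Units.mk0 (x + y) hxy) : ℕ) : ZMod M))
    (k : ℝ) (μ : F → ℝ) (hμ0 : ∀ x, 0 ≤ μ x) (hμ1 : ∑ x, μ x = 1)
    (hk : ∀ x, μ x ≤ (2 : ℝ) ^ (-k))
    (A : F → F) (hA : ∀ y, A y ≠ y) :
    (∑ t : ZMod M × ZMod M × F,
        |(∑ x ∈ Finset.univ.filter
            (fun x : F => nmExt x t.2.2 = t.1 ∧ nmExt x (A t.2.2) = t.2.1), μ x) /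
              (Fintype.card F : ℝ) -
          (∑ x ∈ Finset.univ.filter (fun x : F => nmExt x (A t.2.2) = t.2.1), μ x) /
            ((M : ℝ) * (Fintype.card F : ℝ))|) / 2 ≤
      (M : ℝ) * (Fintype.card F : ℝ) ^ ((1 : ℝ)/4) * (2 : ℝ) ^ (1 - k/2) := by
  let D : F → ZMod M × ZMod M → ℝ := fun y p =>
    (∑ x ∈ univ.filter (fun x => nmExt x y = p.1 ∧ nmExt x (A y) = p.2), μ x)
      - (∑ x ∈ univ.filter (fun x => nmExt x (A y) = p.2), μ x) / M
  have hδ : (0 : ℝ) ≤ 2 ^ (-k) := by positivity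
  have mom := moment_D M hM g hg dlog hdlog nmExt hnm (2 ^ (-k)) μ hμ0 hμ1 hk hδ A hA D
    (fun y p => by simp only [D])
  have hq : (0 : ℝ) < Fintype.card F := by exact_mod_cast Fintype.card_pos
  have hM0 : (0 : ℝ) < M := by exact_mod_cast Nat.pos_of_ne_zero (NeZero.ne M)
  set q : ℝ := (Fintype.card F : ℝ) with hqd
  have e : ∀ t : ZMod M × ZMod M × F,
      |(∑ x ∈ Finset.univ.filter
            (fun x : F => nmExt x t.2.2 = t.1 ∧ nmExt x (A t.2.2) = t.2.1), μ x) / q -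
          (∑ x ∈ Finset.univ.filter (fun x : F => nmExt x (A t.2.2) = t.2.1), μ x) /
            ((M : ℝ) * q)| = |D t.2.2 (t.1, t.2.1)| / q := by
    intro t
    rw [← abs_of_pos hq, ← abs_div, abs_of_pos hq]
    congr 1
    simp only [D]
    rw [sub_div, div_div]
  rw [Finset.sum_congr rfl (fun t _ => e t), ← Finset.sum_div]
  have cs := Finset.sum_mul_sq_le_sq_mul_sq (univ : Finset (ZMod M × ZMod M × F)) (fun _ => (1 : ℝ))
    (fun t => |D t.2.2 (t.1, t.2.1)|)
  have e3 : ∑ t : ZMod M × ZMod M × F, |D t.2.2 (t.1, t.2.1)| ^ 2 = ∑ y, ∑ p, D y p ^ 2 := by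
    simp_rw [sq_abs, Fintype.sum_prod_type]
    conv_rhs => rw [Finset.sum_comm]
    refine Finset.sum_congr rfl fun a _ => ?_
    rw [Finset.sum_comm]
  rw [e3] at cs
  set S := ∑ t : ZMod M × ZMod M × F, |D t.2.2 (t.1, t.2.1)| with hS
  have cs2 : S ^ 2 ≤ (M * M * q) * (2 ^ (-k) * (16 * (q * √q))) := by
    have c : (∑ i : ZMod M × ZMod M × F, (1 : ℝ) ^ 2) = M * M * q := by
      simp [Fintype.card_prod, ZMod.card, hqd]; ring
    simp only [one_mul] at cs
    rw [c] at cs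
    exact cs.trans (mul_le_mul_of_nonneg_left mom (by positivity))
  have h4 : (q ^ ((1 : ℝ)/4)) ^ 2 = √q := by
    rw [← Real.rpow_natCast, ← Real.rpow_mul hq.le, Real.sqrt_eq_rpow]; norm_num
  have h5 : ((2 : ℝ) ^ (1 - k/2)) ^ 2 = 4 * 2 ^ (-k) := by
    rw [← Real.rpow_natCast, ← Real.rpow_mul (by norm_num),
      show (1 - k/2) * ((2 : ℕ) : ℝ) = 2 + -k by push_cast; ring, Real.rpow_add (by norm_num)]
    norm_num
  rw [div_div, div_le_iff₀ (by positivity)]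
  refine le_of_sq_le_sq ?_ (by positivity)
  refine cs2.trans (le_of_eq ?_)
  rw [mul_pow, mul_pow, mul_pow, h4, h5]
  ring
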